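/- arXiv:1310.2754 — 2 statements merged into one kernel-verified Lean document; each statement's English description precedes it below -/
import Mathlib

section
/- Let $(\Delta_0,m_0)$ be a finite measure space and let $\{\Lambda_i\}_{i\in I}$, $I\subseteq\mathbb N$, be pairwise disjoint measurable subsets of $\Delta_0$ with $m_0(\Lambda_i)>0$ and $m_0(\Delta_0\setminus\bigcup_i\Lambda_i)=0$. Let $R_i\ge 1$ be integers with $\gcd\{R_i\}=1$, and let $R:\Delta_0\to\{1,2,\dots\}$ be measurable with $R=R_i$ on $\Lambda_i$. Let $F^R:\Delta_0\to\Delta_0$ be a measurable map which sends each $\Lambda_i$ bijectively onto $\Delta_0$, and assume that the partition is generating: every measurable subset of $\Delta_0$ coincides, up to an $m_0$-null set, with a set of the $\sigma$-algebra generated by the sets $(F^R)^{-n}(\Lambda_i)$, $n\ge 0$, $i\in I$. For $x,y\in\Delta_0$ let $s(x,y)\in\{0,1,\dots\}\cup\{\infty\}$ be the least $n\ge 0$ such that $(F^R)^n(x)$ and $(F^R)^n(y)$ do not lie in a common $\Lambda_i$ ($\infty$ if there is none). Assume that $F^R$ has a measurable Jacobian $JF^R$ with respect to $m_0$, strictly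 positive on each $\Lambda_i$ (that is, $m_0(F^R(A))=\int_A JF^R\,dm_0$ for every measurable $A$ contained in a single $\Lambda_i$), and that there are $C_F>0$ and $0<\beta<1$ with $$\left|\log\frac{JF^R(x)}{JF^R(y)}\right|\le C_F\,\beta^{s(F^R(x),F^R(y))}\qquad\text{for all } x,y \text{ in the same } \Lambda_i,$$ where $\beta^\infty=0$. Let $\Delta=\{(x,l):x\in\Delta_0,\ 0\le l<R(x)\}$ be the tower, with the tower map $F(x,l)=(x,l+1)$ if $l+1<R(x)$ and $F(x,l)=(F^R(x),0)$ if $l+1=R(x)$, with the measure $m$ which on each level $\Delta_l=\{(x,l)\in\Delta\}$ is the copy of $m_0$ restricted to $\{R>l\}$, and with the sets $\Delta_{l,i}=\{(x,l)\in\Delta:x\in\Lambda_i\}$. Put $s((x,l),(y,l'))=s(x,y)$ if the two points lie in the same $\Delta_{l,i}$, and $s((x,l),(y,l'))=0$ otherwise. Let $\mathcal F_\beta^+$ be the set of functions $\varphi:\Delta\to\mathbb R$ for which there is $C_\varphi>0$ such that $|\varphi(p)-\varphi(q)|\le C_\varphi\beta^{s(p,q)}$ for all $p,q\in\Delta$,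 and such that on each $\Delta_{l,i}$ either $\varphi\equiv 0$, or $\varphi>0$ and $|\varphi(p)/\varphi(q)-1|\le C_\varphi\beta^{s(p,q)}$ for all $p,q\in\Delta_{l,i}$. Assume that $R$ is integrable with respect to $m_0$. Then: 1. $F$ has a unique invariant probability measure $\nu$ on $\Delta$ which is equivalent to $m$; 2. the density $d\nu/dm$ (has a measurable version which) belongs to $\mathcal F_\beta^+$ and is bounded below by a strictly positive constant; 3. the system $(F,\nu)$ is mixing, i.e. $\nu(F^{-n}(A)\cap B)\to\nu(A)\nu(B)$ as $n\to\infty$ for all measurable $A,B\subseteq\Delta$. -/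
open MeasureTheory Filter Set Topology

noncomputable section

/-- `β ^ s` for an extended-natural separation time, with the convention `β ^ ∞ = 0`. -/
def epow (β : ℝ) (n : ℕ∞) : ℝ := if n = ⊤ then 0 else β ^ n.toNat

/-- The separation time of `x` and `y`: the least `n` such that the `n`-th iterates under the
return map do not lie in a common element of the partition (`∞` if there is no such `n`). -/
def sepTime {Δ₀ : Type*} (I : Set ℕ) (Λ : ℕ → Set Δ₀) (FR : Δ₀ → Δ₀) (x y : Δ₀) : ℕ∞ :=
  ⨅ n ∈ {n : ℕ | ¬ ∃ i ∈ I, FR^[n] x ∈ Λ i ∧ FR^[n] y ∈ Λ i}, (n : ℕ∞)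

/-- The σ-algebra generated by the sets `(F^R)⁻ⁿ(Λ_i)`, `n ≥ 0`, `i ∈ I`, that is, by the cylinders
of the return map. -/
abbrev cylinderSigma {Δ₀ : Type*} (I : Set ℕ) (Λ : ℕ → Set Δ₀) (FR : Δ₀ → Δ₀) :
    MeasurableSpace Δ₀ :=
  MeasurableSpace.generateFrom {A | ∃ n : ℕ, ∃ i ∈ I, A = FR^[n] ⁻¹' Λ i}

/-- The data of a Young tower over the base `Δ₀`. -/
structure YoungTower (Δ₀ : Type*) [MeasurableSpace Δ₀] where
  /-- the reference measure on the base -/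
  m₀ : Measure Δ₀
  m₀_finite : IsFiniteMeasure m₀
  /-- the index set of the partition -/
  I : Set ℕ
  /-- the elements of the partition (mod `m₀`) of the base; only `Λ i` with `i ∈ I` matter -/
  Λ : ℕ → Set Δ₀
  Λ_meas : ∀ i ∈ I, MeasurableSet (Λ i)
  Λ_disj : I.PairwiseDisjoint Λ
  Λ_pos : ∀ i ∈ I, 0 < m₀ (Λ i)
  Λ_full : m₀ (univ \ ⋃ i ∈ I, Λ i) = 0
  /-- the return times `R_i` -/
  Ret : ℕ → ℕ
  Ret_pos : ∀ i ∈ I, 1 ≤ Ret i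
  /-- the greatest common divisor of the `R_i` is `1` -/
  Ret_gcd : ∀ d : ℕ, (∀ i ∈ I, d ∣ Ret i) → d = 1
  /-- the return time as a function on the base -/
  R : Δ₀ → ℕ
  R_meas : Measurable R
  R_pos : ∀ x, 0 < R x
  R_eq : ∀ i ∈ I, ∀ x ∈ Λ i, R x = Ret i
  /-- the return map `F^R` -/
  FR : Δ₀ → Δ₀
  FR_meas : Measurable FR
  FR_bij : ∀ i ∈ I, BijOn FR (Λ i) univ
  /-- the partition is generating: mod `m₀`, every measurable set belongs to the σ-algebra
  generated by the cylinders of the return map -/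
  generating : ∀ A : Set Δ₀, MeasurableSet A →
    ∃ B : Set Δ₀, MeasurableSet[cylinderSigma I Λ FR] B ∧ A =ᵐ[m₀] B
  /-- the Jacobian of the return map with respect to `m₀` -/
  JFR : Δ₀ → ℝ
  JFR_meas : Measurable JFR
  JFR_pos : ∀ i ∈ I, ∀ x ∈ Λ i, 0 < JFR x
  JFR_jac : ∀ i ∈ I, ∀ A : Set Δ₀, A ⊆ Λ i → MeasurableSet A →
    m₀ (FR '' A) = ∫⁻ x in A, ENNReal.ofReal (JFR x) ∂m₀
  /-- the distortion constant -/
  CF : ℝ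
  /-- the distortion rate -/
  β : ℝ
  CF_pos : 0 < CF
  β_pos : 0 < β
  β_lt_one : β < 1
  distortion : ∀ i ∈ I, ∀ x ∈ Λ i, ∀ y ∈ Λ i,
    |Real.log (JFR x / JFR y)| ≤ CF * epow β (sepTime I Λ FR (FR x) (FR y))

attribute [instance] YoungTower.m₀_finite

namespace YoungTower

variable {Δ₀ : Type*} [MeasurableSpace Δ₀] (T : YoungTower Δ₀)

/-- Separation time on the base. -/
def sep (x y : Δ₀) : ℕ∞ := sepTime T.I T.Λ T.FR x y

/-- The tower `Δ = {(x, l) : x ∈ Δ₀, 0 ≤ l < R x}`, with the σ-algebra induced by `Δ₀ × ℕ`. -/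
abbrev Tower : Type _ := {p : Δ₀ × ℕ // p.2 < T.R p.1}

/-- The tower map `F`. -/
def towerMap (p : T.Tower) : T.Tower :=
  if h : p.1.2 + 1 < T.R p.1.1 then ⟨(p.1.1, p.1.2 + 1), h⟩
  else ⟨(T.FR p.1.1, 0), T.R_pos _⟩

/-- The reference measure `m` on the tower: on the `l`-th level it is the copy of `m₀`
restricted to `{R > l}`. -/
def towerMeasure : Measure T.Tower :=
  (Measure.sum fun l : ℕ =>
    (T.m₀.restrict {x | l < T.R x}).map fun x => (x, l)).comap Subtype.val

/-- The partition element `Δ_{l,i}` of the tower. -/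
def pieceSet (l i : ℕ) : Set T.Tower := {p | p.1.2 = l ∧ p.1.1 ∈ T.Λ i}

/-- Two points of the tower lie in the same partition element `Δ_{l,i}`. -/
def samePiece (p q : T.Tower) : Prop :=
  ∃ l : ℕ, ∃ i ∈ T.I, p ∈ T.pieceSet l i ∧ q ∈ T.pieceSet l i

open Classical in
/-- Separation time on the tower: the separation time of the base points if the two points
lie in the same partition element `Δ_{l,i}`, and `0` otherwise. -/
def sepTower (p q : T.Tower) : ℕ∞ :=
  if T.samePiece p q then T.sep p.1.1 q.1.1 else 0

/-- Membership in `F_β`: `|φ p - φ q| ≤ C * β ^ s(p,q)` on the whole tower. -/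
def memF (φ : T.Tower → ℝ) : Prop :=
  ∃ C : ℝ, 0 < C ∧ ∀ p q : T.Tower, |φ p - φ q| ≤ C * epow T.β (T.sepTower p q)

/-- Membership in `F_β⁺`: `φ ∈ F_β` and, for some constant `C`, on each `Δ_{l,i}` either `φ ≡ 0`,
or `φ > 0` and `|φ p / φ q - 1| ≤ C * β ^ s(p,q)`. -/
def memFplus (φ : T.Tower → ℝ) : Prop :=
  T.memF φ ∧ ∃ C : ℝ, 0 < C ∧ ∀ l : ℕ, ∀ i ∈ T.I,
    (∀ p ∈ T.pieceSet l i, φ p = 0) ∨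
    ((∀ p ∈ T.pieceSet l i, 0 < φ p) ∧
      ∀ p ∈ T.pieceSet l i, ∀ q ∈ T.pieceSet l i,
        |φ p / φ q - 1| ≤ C * epow T.β (T.sepTower p q))

/-- Mixing of `(F, ν)`. -/
def Mixing (ν : Measure T.Tower) : Prop :=
  ∀ A B : Set T.Tower, MeasurableSet A → MeasurableSet B →
    Tendsto (fun n : ℕ => ν (T.towerMap^[n] ⁻¹' A ∩ B)) atTop (𝓝 (ν A * ν B))

end YoungTower

end

noncomputable section

open scoped ENNReal

/-! ### Cylinders and separation times -/

namespace YoungTower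

variable {Δ₀ : Type*} [MeasurableSpace Δ₀] (T : YoungTower Δ₀)

/-- The cylinder of points following the itinerary `w` under the return map. -/
def cyl : List ℕ → Set Δ₀
  | [] => univ
  | i :: w => T.Λ i ∩ T.FR ⁻¹' cyl w

/-- Words in the index set of the partition. -/
def Admissible (w : List ℕ) : Prop := ∀ i ∈ w, i ∈ T.I

variable {T}

lemma admissible_nil : T.Admissible [] := by simp [Admissible]

lemma admissible_cons {i : ℕ} {w : List ℕ} :
    T.Admissible (i :: w) ↔ i ∈ T.I ∧ T.Admissible w := by
  simp [Admissible]

lemma measurableSet_cyl {w : List ℕ} (hw : T.Admissible w) : MeasurableSet (T.cyl w) := by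
  induction w with
  | nil => exact MeasurableSet.univ
  | cons i w ih =>
    rw [admissible_cons] at hw
    exact (T.Λ_meas i hw.1).inter (T.FR_meas (ih hw.2))

lemma eq_of_mem_Λ {i j : ℕ} (hi : i ∈ T.I) (hj : j ∈ T.I) {x : Δ₀} (hx : x ∈ T.Λ i)
    (hx' : x ∈ T.Λ j) : i = j := by
  by_contra hij
  exact (disjoint_left.1 (T.Λ_disj hi hj hij)) hx hx'

lemma cyl_subset_cyl {v w : List ℕ} (hv : T.Admissible v) (hw : T.Admissible w)
    (h : w.length ≤ v.length) {x : Δ₀} (hxv : x ∈ T.cyl v) (hxw : x ∈ T.cyl w) :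
    T.cyl v ⊆ T.cyl w := by
  induction w generalizing v x with
  | nil => exact subset_univ _
  | cons i w ih =>
    cases v with
    | nil => simp at h
    | cons j v =>
      rw [admissible_cons] at hv hw
      obtain rfl := eq_of_mem_Λ hv.1 hw.1 hxv.1 hxw.1
      exact inter_subset_inter_right _
        (preimage_mono (ih hv.2 hw.2 (by simpa using h) hxv.2 hxw.2))

lemma eq_of_mem_cyl {v w : List ℕ} (hv : T.Admissible v) (hw : T.Admissible w)
    (h : w.length = v.length) {x : Δ₀} (hxv : x ∈ T.cyl v) (hxw : x ∈ T.cyl w) : v = w := by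
  induction w generalizing v x with
  | nil => simpa using h.symm
  | cons i w ih =>
    cases v with
    | nil => simp at h
    | cons j v =>
      rw [admissible_cons] at hv hw
      obtain rfl := eq_of_mem_Λ hv.1 hw.1 hxv.1 hxw.1
      rw [ih hv.2 hw.2 (by simpa using h) hxv.2 hxw.2]

lemma le_sep_iff {x y : Δ₀} {k : ℕ} : (k : ℕ∞) ≤ T.sep x y ↔
    ∀ n < k, ∃ i ∈ T.I, T.FR^[n] x ∈ T.Λ i ∧ T.FR^[n] y ∈ T.Λ i := by
  simp only [sep, sepTime, le_iInf_iff, mem_ofPred_eq, Nat.cast_le]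
  exact forall_congr' fun n => by
    rw [← not_lt, not_imp_not]

lemma le_sep_iff_exists_cyl {x y : Δ₀} {k : ℕ} : (k : ℕ∞) ≤ T.sep x y ↔
    ∃ w, T.Admissible w ∧ w.length = k ∧ x ∈ T.cyl w ∧ y ∈ T.cyl w := by
  rw [le_sep_iff]
  induction k generalizing x y with
  | zero => simpa using ⟨admissible_nil, mem_univ x, mem_univ y⟩
  | succ k ih =>
    constructor
    · intro h
      obtain ⟨i, hi, hx, hy⟩ := h 0 (by simp)
      obtain ⟨w, hw, hk, hxw, hyw⟩ := (ih (x := T.FR x) (y := T.FR y)).1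
        fun n hn => h (n + 1) (by simpa using hn)
      exact ⟨i :: w, admissible_cons.2 ⟨hi, hw⟩, by simp [hk], ⟨hx, hxw⟩, ⟨hy, hyw⟩⟩
    · rintro ⟨w, hw, hk, hxw, hyw⟩ n hn
      cases w with
      | nil => simp at hk
      | cons i w =>
        rw [admissible_cons] at hw
        cases n with
        | zero => exact ⟨i, hw.1, hxw.1, hyw.1⟩
        | succ n =>
          exact (ih (x := T.FR x) (y := T.FR y)).2
            ⟨w, hw.2, by simpa using hk, hxw.2, hyw.2⟩ n (by omega)

lemma epow_le_of_le {β : ℝ} (hβ : 0 < β) (hβ' : β < 1) {k : ℕ} {s : ℕ∞} (h : (k : ℕ∞) ≤ s) :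
    epow β s ≤ β ^ k := by
  unfold epow
  split_ifs with hs
  · positivity
  · lift s to ℕ using hs
    exact pow_le_pow_of_le_one hβ.le hβ'.le (by simpa using h)

lemma exists_mem_I (T : YoungTower Δ₀) : ∃ i, i ∈ T.I := by
  by_contra! h
  simpa using T.Ret_gcd 0 fun i hi => absurd hi (h i)

/-! ### Distortion of the reference measure -/

lemma measure_eq_lintegral_jacobian {i : ℕ} (hi : i ∈ T.I) {A : Set Δ₀} (hA : MeasurableSet A) :
    T.m₀ A = ∫⁻ x in T.Λ i ∩ T.FR ⁻¹' A, ENNReal.ofReal (T.JFR x) ∂T.m₀ := by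
  rw [← T.JFR_jac i hi _ inter_subset_left ((T.Λ_meas i hi).inter (T.FR_meas hA))]
  congr 1
  ext y
  constructor
  · intro hy
    obtain ⟨x, hx, rfl⟩ := (T.FR_bij i hi).surjOn (mem_univ y)
    exact ⟨x, ⟨hx, hy⟩, rfl⟩
  · rintro ⟨x, hx, rfl⟩
    exact hx.2

lemma measure_branch_eq_zero_iff {i : ℕ} (hi : i ∈ T.I) {A : Set Δ₀} (hA : MeasurableSet A) :
    T.m₀ (T.Λ i ∩ T.FR ⁻¹' A) = 0 ↔ T.m₀ A = 0 := by
  have hm : MeasurableSet (T.Λ i ∩ T.FR ⁻¹' A) := (T.Λ_meas i hi).inter (T.FR_meas hA)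
  rw [measure_eq_lintegral_jacobian hi hA, setLIntegral_eq_zero_iff hm
    T.JFR_meas.ennreal_ofReal]
  constructor
  · intro h
    have : ∀ᵐ x ∂T.m₀, x ∉ T.Λ i ∩ T.FR ⁻¹' A := measure_eq_zero_iff_ae_notMem.1 h
    filter_upwards [this] with x hx hx'
    exact absurd hx' hx
  · intro h
    rw [measure_eq_zero_iff_ae_notMem]
    filter_upwards [h] with x hx hx'
    have := T.JFR_pos i hi x hx'.1
    have h2 := hx hx'
    rw [ENNReal.ofReal_eq_zero] at h2
    linarith

lemma measure_univ_pos (T : YoungTower Δ₀) : 0 < T.m₀ univ := by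
  obtain ⟨i, hi⟩ := T.exists_mem_I
  exact (T.Λ_pos i hi).trans_le (measure_mono (subset_univ _))

lemma measure_cyl_pos {w : List ℕ} (hw : T.Admissible w) : 0 < T.m₀ (T.cyl w) := by
  induction w with
  | nil => exact T.measure_univ_pos
  | cons i w ih =>
    rw [admissible_cons] at hw
    rw [pos_iff_ne_zero, cyl, Ne, measure_branch_eq_zero_iff hw.1 (measurableSet_cyl hw.2)]
    exact (ih hw.2).ne'

lemma jacobian_le {i : ℕ} (hi : i ∈ T.I) {w : List ℕ} (hw : T.Admissible w) {x y : Δ₀}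
    (hx : x ∈ T.Λ i) (hy : y ∈ T.Λ i) (hxw : T.FR x ∈ T.cyl w) (hyw : T.FR y ∈ T.cyl w) :
    T.JFR y ≤ Real.exp (T.CF * T.β ^ w.length) * T.JFR x := by
  have hJx := T.JFR_pos i hi x hx
  have hJy := T.JFR_pos i hi y hy
  have h := T.distortion i hi y hy x hx
  have h2 := epow_le_of_le T.β_pos T.β_lt_one
    ((le_sep_iff_exists_cyl (T := T)).2 ⟨w, hw, rfl, hyw, hxw⟩)
  have h3 : Real.log (T.JFR y / T.JFR x) ≤ T.CF * T.β ^ w.length :=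
    (le_abs_self _).trans (h.trans (mul_le_mul_of_nonneg_left h2 T.CF_pos.le))
  rw [Real.log_le_iff_le_exp (div_pos hJy hJx), div_le_iff₀ hJx] at h3
  exact h3

lemma measure_distortion {i : ℕ} (hi : i ∈ T.I) {w : List ℕ} (hw : T.Admissible w)
    {A B : Set Δ₀} (hA : MeasurableSet A) (hB : MeasurableSet B) (hAw : A ⊆ T.cyl w)
    (hBw : B ⊆ T.cyl w) :
    T.m₀ (T.Λ i ∩ T.FR ⁻¹' A) * T.m₀ B ≤
      ENNReal.ofReal (Real.exp (T.CF * T.β ^ w.length)) *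
        (T.m₀ (T.Λ i ∩ T.FR ⁻¹' B) * T.m₀ A) := by
  set e := Real.exp (T.CF * T.β ^ w.length)
  have hmA : MeasurableSet (T.Λ i ∩ T.FR ⁻¹' A) := (T.Λ_meas i hi).inter (T.FR_meas hA)
  have hmB : MeasurableSet (T.Λ i ∩ T.FR ⁻¹' B) := (T.Λ_meas i hi).inter (T.FR_meas hB)
  have key : ∀ x ∈ T.Λ i ∩ T.FR ⁻¹' A, T.m₀ B ≤
      ENNReal.ofReal e * T.m₀ (T.Λ i ∩ T.FR ⁻¹' B) * ENNReal.ofReal (T.JFR x) := by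
    intro x hx
    rw [measure_eq_lintegral_jacobian hi hB]
    calc _ ≤ ∫⁻ _ in T.Λ i ∩ T.FR ⁻¹' B, ENNReal.ofReal (e * T.JFR x) ∂T.m₀ :=
          setLIntegral_mono' hmB fun y hy => ENNReal.ofReal_le_ofReal
            (jacobian_le hi hw hx.1 hy.1 (hAw hx.2) (hBw hy.2))
      _ = _ := by
          rw [setLIntegral_const, ENNReal.ofReal_mul (Real.exp_pos _).le]
          ring
  calc T.m₀ (T.Λ i ∩ T.FR ⁻¹' A) * T.m₀ B
      = ∫⁻ _ in T.Λ i ∩ T.FR ⁻¹' A, T.m₀ B ∂T.m₀ := by rw [setLIntegral_const, mul_comm]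
    _ ≤ ∫⁻ x in T.Λ i ∩ T.FR ⁻¹' A, ENNReal.ofReal e * T.m₀ (T.Λ i ∩ T.FR ⁻¹' B) *
          ENNReal.ofReal (T.JFR x) ∂T.m₀ := setLIntegral_mono' hmA key
    _ = _ := by
      rw [lintegral_const_mul _ T.JFR_meas.ennreal_ofReal,
        ← measure_eq_lintegral_jacobian hi hA, mul_assoc]

/-! ### Regular set functions on the base -/

variable (T) in
/-- The distortion constant preserved by the transfer of measures along the return map. -/
def regConst : ℝ := T.CF / (1 - T.β)

lemma regConst_pos (T : YoungTower Δ₀) : 0 < T.regConst :=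
  div_pos T.CF_pos (sub_pos.2 T.β_lt_one)

lemma regConst_eq (T : YoungTower Δ₀) : T.regConst * T.β + T.CF = T.regConst := by
  have := sub_pos.2 T.β_lt_one
  unfold regConst
  field_simp
  ring

variable (T) in
/-- The distortion bound at depth `k`. -/
def regExp (k : ℕ) : ℝ≥0∞ := ENNReal.ofReal (Real.exp (T.regConst * T.β ^ k))

lemma regExp_ne_top (T : YoungTower Δ₀) (k : ℕ) : T.regExp k ≠ ⊤ := ENNReal.ofReal_ne_top

lemma one_le_regExp (T : YoungTower Δ₀) (k : ℕ) : 1 ≤ T.regExp k := by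
  rw [regExp, ENNReal.one_le_ofReal, Real.one_le_exp_iff]
  have := T.regConst_pos
  have := T.β_pos
  positivity

lemma regExp_ne_zero (T : YoungTower Δ₀) (k : ℕ) : T.regExp k ≠ 0 :=
  (zero_lt_one.trans_le (T.one_le_regExp k)).ne'

lemma tendsto_regExp (T : YoungTower Δ₀) : Tendsto T.regExp atTop (𝓝 1) := by
  have h : Tendsto (fun k => T.regConst * T.β ^ k) atTop (𝓝 0) := by
    simpa using (tendsto_pow_atTop_nhds_zero_of_lt_one T.β_pos.le T.β_lt_one).const_mul T.regConst
  have := ENNReal.tendsto_ofReal ((Real.continuous_exp.tendsto _).comp h)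
  rw [Real.exp_zero, ENNReal.ofReal_one] at this
  exact this

lemma regExp_succ (T : YoungTower Δ₀) (k : ℕ) :
    T.regExp (k + 1) * ENNReal.ofReal (Real.exp (T.CF * T.β ^ k)) = T.regExp k := by
  rw [regExp, regExp, ← ENNReal.ofReal_mul (Real.exp_pos _).le, ← Real.exp_add]
  congr 2
  nth_rewrite 2 [← T.regConst_eq]
  ring

variable (T) in
/-- Set functions whose density with respect to `m₀` has logarithmic oscillation at most
`regConst * β ^ k` on cylinders of length `k`. -/
def Reg (φ : Set Δ₀ → ℝ≥0∞) : Prop :=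
  ∀ w, T.Admissible w → ∀ A B, MeasurableSet A → MeasurableSet B → A ⊆ T.cyl w → B ⊆ T.cyl w →
    φ A * T.m₀ B ≤ T.regExp w.length * (φ B * T.m₀ A)

lemma reg_zero : T.Reg fun _ => 0 := fun _ _ _ _ _ _ _ _ => by simp

lemma reg_m₀ (T : YoungTower Δ₀) : T.Reg fun A => T.m₀ A := fun w _ A B _ _ _ _ => by
  rw [mul_comm (T.m₀ A)]
  exact le_mul_of_one_le_left zero_le (T.one_le_regExp _)

lemma Reg.tsum {ι : Type*} {φ : ι → Set Δ₀ → ℝ≥0∞} (h : ∀ i, T.Reg (φ i)) :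
    T.Reg fun A => ∑' i, φ i A := fun w hw A B hA hB hAw hBw => by
  rw [← ENNReal.tsum_mul_right, ← ENNReal.tsum_mul_right, ← ENNReal.tsum_mul_left]
  exact ENNReal.tsum_le_tsum fun i => h i w hw A B hA hB hAw hBw

lemma Reg.const_mul {φ : Set Δ₀ → ℝ≥0∞} (h : T.Reg φ) (c : ℝ≥0∞) :
    T.Reg fun A => c * φ A := fun w hw A B hA hB hAw hBw => by
  calc c * φ A * T.m₀ B = c * (φ A * T.m₀ B) := by ring
    _ ≤ c * (T.regExp w.length * (φ B * T.m₀ A)) := mul_le_mul_right (h w hw A B hA hB hAw hBw) c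
    _ = _ := by ring

lemma Reg.congr {φ ψ : Set Δ₀ → ℝ≥0∞} (h : T.Reg φ)
    (heq : ∀ A, MeasurableSet A → ψ A = φ A) : T.Reg ψ := fun w hw A B hA hB hAw hBw => by
  rw [heq A hA, heq B hB]
  exact h w hw A B hA hB hAw hBw

lemma Reg.branch {φ : Set Δ₀ → ℝ≥0∞} (h : T.Reg φ) {i : ℕ} (hi : i ∈ T.I) :
    T.Reg fun A => φ (T.Λ i ∩ T.FR ⁻¹' A) := fun w hw A B hA hB hAw hBw => by
  have hmA : MeasurableSet (T.Λ i ∩ T.FR ⁻¹' A) := (T.Λ_meas i hi).inter (T.FR_meas hA)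
  have hmB : MeasurableSet (T.Λ i ∩ T.FR ⁻¹' B) := (T.Λ_meas i hi).inter (T.FR_meas hB)
  rcases eq_or_ne (T.m₀ B) 0 with h0 | h0
  · simp [h0]
  have h0' : T.m₀ (T.Λ i ∩ T.FR ⁻¹' B) ≠ 0 := by rwa [Ne, measure_branch_eq_zero_iff hi hB]
  have h1 := h (i :: w) (admissible_cons.2 ⟨hi, hw⟩) _ _ hmA hmB
    (inter_subset_inter_right _ (preimage_mono hAw))
    (inter_subset_inter_right _ (preimage_mono hBw))
  have h2 := measure_distortion hi hw hA hB hAw hBw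
  rw [← ENNReal.mul_le_mul_iff_left h0' (measure_ne_top _ _)]
  set φA := φ (T.Λ i ∩ T.FR ⁻¹' A)
  set φB := φ (T.Λ i ∩ T.FR ⁻¹' B)
  set a := T.m₀ (T.Λ i ∩ T.FR ⁻¹' A)
  set b := T.m₀ (T.Λ i ∩ T.FR ⁻¹' B)
  calc φA * T.m₀ B * b = φA * b * T.m₀ B := by ring
    _ ≤ T.regExp (w.length + 1) * (φB * a) * T.m₀ B := mul_le_mul_left h1 _
    _ = T.regExp (w.length + 1) * φB * (a * T.m₀ B) := by ring
    _ ≤ T.regExp (w.length + 1) * φB *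
        (ENNReal.ofReal (Real.exp (T.CF * T.β ^ w.length)) * (b * T.m₀ A)) := by gcongr
    _ = T.regExp (w.length + 1) * ENNReal.ofReal (Real.exp (T.CF * T.β ^ w.length)) *
        (φB * T.m₀ A) * b := by ring
    _ = _ := by rw [T.regExp_succ]

lemma Reg.mul_le {φ : Set Δ₀ → ℝ≥0∞} (h : T.Reg φ) {A : Set Δ₀} (hA : MeasurableSet A) :
    φ A * T.m₀ univ ≤ T.regExp 0 * (φ univ * T.m₀ A) :=
  h [] admissible_nil A univ hA .univ (subset_univ _) (subset_univ _)

lemma Reg.le_mul {φ : Set Δ₀ → ℝ≥0∞} (h : T.Reg φ) {A : Set Δ₀} (hA : MeasurableSet A) :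
    φ univ * T.m₀ A ≤ T.regExp 0 * (φ A * T.m₀ univ) :=
  h [] admissible_nil univ A .univ hA (subset_univ _) (subset_univ _)

lemma Reg.absolutelyContinuous {μ : Measure Δ₀} (h : T.Reg fun A => μ A) : μ ≪ T.m₀ := by
  refine Measure.AbsolutelyContinuous.mk fun A hA h0 => ?_
  have := h.mul_le hA
  rw [h0] at this
  simpa [T.measure_univ_pos.ne'] using this

lemma Reg.absolutelyContinuous' {μ : Measure Δ₀} (h : T.Reg fun A => μ A) (h0 : μ univ ≠ 0) :
    T.m₀ ≪ μ := by
  refine Measure.AbsolutelyContinuous.mk fun A hA hA0 => ?_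
  have := h.le_mul hA
  rw [hA0] at this
  simpa [h0] using this

/-! ### Countable decompositions into cylinders -/

lemma ae_mem_iUnion_Λ (T : YoungTower Δ₀) : ∀ᵐ x ∂T.m₀, ∃ i ∈ T.I, x ∈ T.Λ i := by
  rw [ae_iff]
  refine measure_mono_null (fun x hx => ?_) T.Λ_full
  simpa using hx

lemma measure_eq_tsum_Λ {μ : Measure Δ₀} (h : μ ≪ T.m₀) {A : Set Δ₀} (hA : MeasurableSet A) :
    μ A = ∑' i : T.I, μ (T.Λ i ∩ A) := by
  rw [← measure_iUnion]
  · refine measure_congr ?_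
    filter_upwards [h.ae_le T.ae_mem_iUnion_Λ] with x hx
    obtain ⟨i, hi, hxi⟩ := hx
    refine propext ⟨fun hxA => ?_, fun hx => ?_⟩
    · exact mem_iUnion.2 ⟨⟨i, hi⟩, hxi, hxA⟩
    · obtain ⟨j, hj⟩ := mem_iUnion.1 hx
      exact hj.2
  · intro i j hij
    exact (T.Λ_disj i.2 j.2 (fun h => hij (Subtype.ext h))).mono inter_subset_left
      inter_subset_left
  · exact fun i => (T.Λ_meas i i.2).inter hA

lemma measure_preimage_null (T : YoungTower Δ₀) {A : Set Δ₀} (h : T.m₀ A = 0) :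
    T.m₀ (T.FR ⁻¹' A) = 0 := by
  refine measure_mono_null (preimage_mono (subset_toMeasurable T.m₀ A)) ?_
  have hm := measurableSet_toMeasurable T.m₀ A
  rw [measure_eq_tsum_Λ (T := T) Measure.AbsolutelyContinuous.rfl (T.FR_meas hm)]
  simp only [ENNReal.tsum_eq_zero]
  intro i
  rwa [measure_branch_eq_zero_iff i.2 hm, measure_toMeasurable]

lemma ae_mem_cyl (T : YoungTower Δ₀) (k : ℕ) :
    ∀ᵐ x ∂T.m₀, ∃ w, T.Admissible w ∧ w.length = k ∧ x ∈ T.cyl w := by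
  induction k with
  | zero => exact .of_forall fun x => ⟨[], admissible_nil, rfl, mem_univ x⟩
  | succ k ih =>
    have h2 : ∀ᵐ x ∂T.m₀, ∃ w, T.Admissible w ∧ w.length = k ∧ T.FR x ∈ T.cyl w :=
      T.measure_preimage_null ih
    filter_upwards [h2, T.ae_mem_iUnion_Λ] with x hx hx'
    obtain ⟨w, hw, hk, hxw⟩ := hx
    obtain ⟨i, hi, hxi⟩ := hx'
    exact ⟨i :: w, admissible_cons.2 ⟨hi, hw⟩, by simp [hk], hxi, hxw⟩

lemma measure_eq_tsum_cyl {μ : Measure Δ₀} (h : μ ≪ T.m₀) (k : ℕ) {A : Set Δ₀}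
    (hA : MeasurableSet A) :
    μ A = ∑' w : {w // T.Admissible w ∧ w.length = k}, μ (T.cyl w ∩ A) := by
  rw [← measure_iUnion]
  · refine measure_congr ?_
    filter_upwards [h.ae_le (T.ae_mem_cyl k)] with x hx
    obtain ⟨w, hw, hk, hxw⟩ := hx
    refine propext ⟨fun hxA => ?_, fun hx => ?_⟩
    · exact mem_iUnion.2 ⟨⟨w, hw, hk⟩, hxw, hxA⟩
    · obtain ⟨j, hj⟩ := mem_iUnion.1 hx
      exact hj.2
  · intro v w hvw
    refine disjoint_left.2 fun x hx hx' => hvw (Subtype.ext ?_)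
    exact eq_of_mem_cyl v.2.1 w.2.1 (w.2.2.trans v.2.2.symm) hx.1 hx'.1
  · exact fun w => (measurableSet_cyl w.2.1).inter hA

lemma measure_le_of_forall_cyl {μ μ' : Measure Δ₀} (h : μ ≪ T.m₀) (h' : μ' ≪ T.m₀) (k : ℕ)
    {c : ℝ≥0∞} (hc : ∀ w, T.Admissible w → w.length = k → ∀ A, MeasurableSet A → A ⊆ T.cyl w →
      μ A ≤ c * μ' A) {A : Set Δ₀} (hA : MeasurableSet A) : μ A ≤ c * μ' A := by
  rw [measure_eq_tsum_cyl h k hA, measure_eq_tsum_cyl h' k hA, ← ENNReal.tsum_mul_left]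
  exact ENNReal.tsum_le_tsum fun w => hc w w.2.1 w.2.2 _ ((measurableSet_cyl w.2.1).inter hA)
    inter_subset_left

lemma Reg.map {μ : Measure Δ₀} (h : T.Reg fun A => μ A) : T.Reg fun A => μ.map T.FR A :=
  (Reg.tsum fun i : T.I => h.branch i.2).congr fun A hA => by
    rw [Measure.map_apply T.FR_meas hA]
    exact measure_eq_tsum_Λ h.absolutelyContinuous (T.FR_meas hA)

end YoungTower

/-! ### Setwise limits of dominated measures -/

/-- A uniformly dominated sequence of measures converges setwise along every ultrafilter. -/
lemma exists_measure_tendsto_ultrafilter {α ι : Type*} [MeasurableSpace α] (m : Measure α)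
    [IsFiniteMeasure m] {C : ℝ≥0∞} (hC : C ≠ ⊤) (μ : ι → Measure α)
    (hμ : ∀ n A, MeasurableSet A → μ n A ≤ C * m A) (U : Ultrafilter ι) :
    ∃ η : Measure α, ∀ A, MeasurableSet A → Tendsto (fun n => μ n A) U (𝓝 (η A)) := by
  have hlim : ∀ A : Set α, ∃ a : ℝ≥0∞, Tendsto (fun n => μ n A) U (𝓝 a) := fun A => by
    obtain ⟨a, -, ha⟩ := isCompact_univ.ultrafilter_le_nhds (U.map fun n => μ n A) (by simp)
    exact ⟨a, ha⟩
  choose L hL using hlim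
  have hbd : ∀ A, MeasurableSet A → L A ≤ C * m A := fun A hA =>
    le_of_tendsto (hL A) (.of_forall fun n => hμ n A hA)
  have hfin : ∀ A, C * m A ≠ ⊤ := fun A => ENNReal.mul_ne_top hC (measure_ne_top _ _)
  have hUnion : ∀ ⦃f : ℕ → Set α⦄, (∀ i, MeasurableSet (f i)) →
      Pairwise (Function.onFun Disjoint f) → L (⋃ i, f i) = ∑' i, L (f i) := by
    intro f hf hd
    have hsum : ∑' i, C * m (f i) ≠ ⊤ := by
      rw [ENNReal.tsum_mul_left, ← measure_iUnion hd hf]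
      exact hfin _
    have hsum' : ∑' i, L (f i) ≠ ⊤ :=
      ne_top_of_le_ne_top hsum (ENNReal.tsum_le_tsum fun i => hbd _ (hf i))
    have h1 : Tendsto (fun n => ∑' i, (μ n (f i)).toReal) U (𝓝 (∑' i, (L (f i)).toReal)) := by
      refine tendsto_tsum_of_dominated_convergence (ENNReal.summable_toReal hsum) (fun i => ?_)
        (.of_forall fun n i => ?_)
      · exact (ENNReal.tendsto_toReal (ne_top_of_le_ne_top (hfin _) (hbd _ (hf i)))).comp (hL _)
      · rw [Real.norm_of_nonneg ENNReal.toReal_nonneg]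
        exact ENNReal.toReal_mono (hfin _) (hμ n _ (hf i))
    have hU := MeasurableSet.iUnion hf
    have h2 : Tendsto (fun n => (μ n (⋃ i, f i)).toReal) U (𝓝 (L (⋃ i, f i)).toReal) :=
      (ENNReal.tendsto_toReal (ne_top_of_le_ne_top (hfin _) (hbd _ hU))).comp (hL _)
    have h3 : ∀ n, (μ n (⋃ i, f i)).toReal = ∑' i, (μ n (f i)).toReal := fun n => by
      rw [measure_iUnion hd hf, ENNReal.tsum_toReal_eq]
      exact fun i => ne_top_of_le_ne_top (hfin _) (hμ n _ (hf i))
    simp only [h3] at h2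
    have h4 := tendsto_nhds_unique h2 h1
    rw [← ENNReal.tsum_toReal_eq
      (fun i => ne_top_of_le_ne_top (hfin _) (hbd _ (hf i)))] at h4
    exact (ENNReal.toReal_eq_toReal_iff' (ne_top_of_le_ne_top (hfin _) (hbd _ hU)) hsum').1 h4
  have h0 : L ∅ = 0 := by simpa using hbd ∅ .empty
  refine ⟨Measure.ofMeasurable (fun A _ => L A) h0 fun f hf hd => hUnion hf hd, fun A hA => ?_⟩
  rw [Measure.ofMeasurable_apply A hA]
  exact hL A

namespace YoungTower

variable {Δ₀ : Type*} [MeasurableSpace Δ₀] {T : YoungTower Δ₀}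

lemma Reg.of_tendsto {ι : Type*} {l : Filter ι} [l.NeBot] {φ : ι → Set Δ₀ → ℝ≥0∞}
    {ψ : Set Δ₀ → ℝ≥0∞} (h : ∀ᶠ n in l, T.Reg (φ n))
    (hlim : ∀ A, MeasurableSet A → Tendsto (fun n => φ n A) l (𝓝 (ψ A))) : T.Reg ψ := by
  intro w hw A B hA hB hAw hBw
  refine le_of_tendsto_of_tendsto
    (ENNReal.Tendsto.mul_const (hlim A hA) (.inr (measure_ne_top _ _)))
    (ENNReal.Tendsto.const_mul (ENNReal.Tendsto.mul_const (hlim B hB)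
      (.inr (measure_ne_top _ _))) (.inr (T.regExp_ne_top _)))
    (h.mono fun n hn => hn w hw A B hA hB hAw hBw)

/-! ### The invariant measure of the return map -/

lemma reg_map_iterate (T : YoungTower Δ₀) (n : ℕ) : T.Reg fun A => T.m₀.map T.FR^[n] A := by
  induction n with
  | zero => simpa using T.reg_m₀
  | succ n ih =>
    have := ih.map
    rwa [Measure.map_map T.FR_meas (T.FR_meas.iterate n), ← Function.iterate_succ'] at this

variable (T) in
/-- The averages of the push-forwards of `m₀` under the return map. -/
def cesaro (n : ℕ) : Measure Δ₀ :=
  ((n : ℝ≥0∞) + 1)⁻¹ • ∑ k ∈ Finset.range (n + 1), T.m₀.map T.FR^[k]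

lemma cesaro_apply (n : ℕ) {A : Set Δ₀} (hA : MeasurableSet A) : T.cesaro n A =
    ((n : ℝ≥0∞) + 1)⁻¹ * ∑ k ∈ Finset.range (n + 1), T.m₀ (T.FR^[k] ⁻¹' A) := by
  simp only [cesaro, Measure.smul_apply, Measure.finsetSum_apply, smul_eq_mul]
  congr 1
  exact Finset.sum_congr rfl fun k _ => Measure.map_apply (T.FR_meas.iterate k) hA

lemma cesaro_univ (n : ℕ) : T.cesaro n univ = T.m₀ univ := by
  rw [cesaro_apply n .univ]
  simp only [preimage_univ, Finset.sum_const, Finset.card_range, nsmul_eq_mul, Nat.cast_add,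
    Nat.cast_one]
  rw [← mul_assoc, ENNReal.inv_mul_cancel (by simp) (by finiteness), one_mul]

lemma reg_cesaro (n : ℕ) : T.Reg fun A => T.cesaro n A := by
  refine ((Reg.tsum fun k : Finset.range (n + 1) => T.reg_map_iterate k).const_mul
    ((n : ℝ≥0∞) + 1)⁻¹).congr fun A _ => ?_
  simp only [cesaro, Measure.smul_apply, Measure.finsetSum_apply, smul_eq_mul]
  rw [← Finset.tsum_subtype]

lemma cesaro_le (n : ℕ) (A : Set Δ₀) (hA : MeasurableSet A) :
    T.cesaro n A ≤ T.regExp 0 * T.m₀ A := by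
  have h := (reg_cesaro (T := T) n).mul_le hA
  rw [cesaro_univ] at h
  rw [← ENNReal.mul_le_mul_iff_left T.measure_univ_pos.ne' (measure_ne_top _ _)]
  calc _ ≤ _ := h
    _ = _ := by ring

lemma cesaro_preimage (n : ℕ) {A : Set Δ₀} (hA : MeasurableSet A) :
    T.cesaro n (T.FR ⁻¹' A) + ((n : ℝ≥0∞) + 1)⁻¹ * T.m₀ A =
      T.cesaro n A + ((n : ℝ≥0∞) + 1)⁻¹ * T.m₀ (T.FR^[n + 1] ⁻¹' A) := by
  rw [cesaro_apply n hA, cesaro_apply n (T.FR_meas hA), ← mul_add, ← mul_add]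
  congr 1
  rw [← Finset.sum_range_succ (fun k => T.m₀ (T.FR^[k] ⁻¹' A)) (n + 1),
    Finset.sum_range_succ' (fun k => T.m₀ (T.FR^[k] ⁻¹' A)) (n + 1)]
  simp only [Function.iterate_succ', preimage_comp, Function.iterate_zero, preimage_id]

/-- The return map preserves a measure of the same mass as `m₀` with regular density. -/
lemma exists_invariant_base (T : YoungTower Δ₀) : ∃ η : Measure Δ₀,
    η univ = T.m₀ univ ∧ (T.Reg fun A => η A) ∧ MeasurePreserving T.FR η η := by
  obtain ⟨η, hη⟩ := exists_measure_tendsto_ultrafilter T.m₀ (T.regExp_ne_top 0) T.cesaro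
    cesaro_le (Ultrafilter.of atTop)
  have hU : ((Ultrafilter.of atTop : Ultrafilter ℕ) : Filter ℕ) ≤ atTop := Ultrafilter.of_le _
  have huniv : η univ = T.m₀ univ := by
    refine tendsto_nhds_unique (hη _ .univ) ?_
    simp only [cesaro_univ]
    exact tendsto_const_nhds
  have : IsFiniteMeasure η := ⟨by rw [huniv]; exact measure_lt_top _ _⟩
  have hz : ∀ f : ℕ → Set Δ₀, Tendsto (fun n : ℕ => ((n : ℝ≥0∞) + 1)⁻¹ * T.m₀ (f n))
      (Ultrafilter.of atTop : Ultrafilter ℕ) (𝓝 0) := by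
    intro f
    have h1 : Tendsto (fun n : ℕ => ((n : ℝ≥0∞) + 1)⁻¹ * T.m₀ univ) atTop (𝓝 0) := by
      have h2 : Tendsto (fun n : ℕ => ((n : ℝ≥0∞) + 1)⁻¹) atTop (𝓝 0) := by
        have := (tendsto_add_atTop_iff_nat 1).2 ENNReal.tendsto_inv_nat_nhds_zero
        simpa using this
      simpa using ENNReal.Tendsto.mul_const h2 (.inr (measure_ne_top T.m₀ univ))
    exact tendsto_of_tendsto_of_tendsto_of_le_of_le tendsto_const_nhds (h1.mono_left hU)
      (fun n => zero_le) fun n => mul_le_mul_right (measure_mono (subset_univ _)) _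
  refine ⟨η, huniv, Reg.of_tendsto (.of_forall fun n => reg_cesaro n) hη, T.FR_meas, Measure.ext fun A hA => ?_⟩
  rw [Measure.map_apply T.FR_meas hA]
  have h1 := (hη _ (T.FR_meas hA)).add (hz fun _ => A)
  have h2 := (hη A hA).add (hz fun n => T.FR^[n + 1] ⁻¹' A)
  simp only [cesaro_preimage _ hA] at h1
  simpa using tendsto_nhds_unique h1 h2

/-! ### Pointwise regular densities -/

variable (T) in
/-- A pointwise defined version of the density `dη/dm₀` of a regular measure `η`. -/
def regDensity (η : Measure Δ₀) (x : Δ₀) : ℝ≥0∞ :=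
  ⨅ w : {w // T.Admissible w},
    (T.cyl w).indicator (fun _ => T.regExp w.1.length * (η (T.cyl w) / T.m₀ (T.cyl w))) x +
      (T.cyl w)ᶜ.indicator (fun _ => ⊤) x

lemma measurable_regDensity (η : Measure Δ₀) : Measurable (T.regDensity η) :=
  Measurable.iInf fun w => (measurable_const.indicator (measurableSet_cyl w.2)).add
    (measurable_const.indicator (measurableSet_cyl w.2).compl)

lemma regDensity_le {η : Measure Δ₀} {w : List ℕ} (hw : T.Admissible w) {x : Δ₀}
    (hx : x ∈ T.cyl w) :
    T.regDensity η x ≤ T.regExp w.length * (η (T.cyl w) / T.m₀ (T.cyl w)) :=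
  (iInf_le _ (⟨w, hw⟩ : {w // T.Admissible w})).trans (by simp [hx])

lemma le_regDensity {η : Measure Δ₀} {c : ℝ≥0∞} {x : Δ₀}
    (h : ∀ w, T.Admissible w → x ∈ T.cyl w →
      c ≤ T.regExp w.length * (η (T.cyl w) / T.m₀ (T.cyl w))) : c ≤ T.regDensity η x := by
  refine le_iInf fun w => ?_
  by_cases hx : x ∈ T.cyl w
  · simpa [hx] using h w w.2 hx
  · simp [hx]

lemma Reg.le_ratio_mul {η : Measure Δ₀} (h : T.Reg fun A => η A) {v w : List ℕ}
    (hv : T.Admissible v) (hw : T.Admissible w) (hvw : T.cyl v ⊆ T.cyl w) {A : Set Δ₀}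
    (hA : MeasurableSet A) (hAw : A ⊆ T.cyl w) :
    η A ≤ T.regExp w.length * (η (T.cyl v) / T.m₀ (T.cyl v)) * T.m₀ A := by
  have h1 := h w hw A (T.cyl v) hA (measurableSet_cyl hv) hAw hvw
  rw [← ENNReal.le_div_iff_mul_le (.inl (measure_cyl_pos hv).ne')
    (.inl (measure_ne_top _ _))] at h1
  refine h1.trans_eq ?_
  simp only [div_eq_mul_inv]
  ring

lemma Reg.ratio_mul_le {η : Measure Δ₀} (h : T.Reg fun A => η A) {w : List ℕ}
    (hw : T.Admissible w) {A : Set Δ₀} (hA : MeasurableSet A) (hAw : A ⊆ T.cyl w) :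
    η (T.cyl w) / T.m₀ (T.cyl w) * T.m₀ A ≤ T.regExp w.length * η A := by
  have h1 := h w hw (T.cyl w) A (measurableSet_cyl hw) hA subset_rfl hAw
  rw [← mul_assoc, ← ENNReal.div_le_iff_le_mul (.inl (measure_cyl_pos hw).ne')
    (.inl (measure_ne_top _ _))] at h1
  refine le_trans (le_of_eq ?_) h1
  simp only [div_eq_mul_inv]
  ring

lemma Reg.regDensity_mul_le {η : Measure Δ₀} (h : T.Reg fun A => η A) {w : List ℕ}
    (hw : T.Admissible w) {x : Δ₀} (hx : x ∈ T.cyl w) {A : Set Δ₀} (hA : MeasurableSet A)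
    (hAw : A ⊆ T.cyl w) :
    T.regDensity η x * T.m₀ A ≤ T.regExp w.length ^ 2 * η A :=
  calc _ ≤ T.regExp w.length * (η (T.cyl w) / T.m₀ (T.cyl w)) * T.m₀ A :=
        mul_le_mul_left (regDensity_le hw hx) _
    _ = T.regExp w.length * (η (T.cyl w) / T.m₀ (T.cyl w) * T.m₀ A) := by ring
    _ ≤ T.regExp w.length * (T.regExp w.length * η A) :=
        mul_le_mul_right (h.ratio_mul_le hw hA hAw) _
    _ = _ := by ring

lemma Reg.le_regDensity_mul {η : Measure Δ₀} [IsFiniteMeasure η] (h : T.Reg fun A => η A)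
    {w : List ℕ} (hw : T.Admissible w) {x : Δ₀} (hx : x ∈ T.cyl w) {A : Set Δ₀}
    (hA : MeasurableSet A) (hAw : A ⊆ T.cyl w) :
    η A ≤ T.regExp w.length * (T.regDensity η x * T.m₀ A) := by
  rcases eq_or_ne (T.m₀ A) 0 with h0 | h0
  · simp [h.absolutelyContinuous h0]
  have key : (T.regExp w.length)⁻¹ * (η A / T.m₀ A) ≤ T.regDensity η x := by
    refine le_regDensity fun v hv hxv => ?_
    rw [← ENNReal.mul_le_mul_iff_right (T.regExp_ne_zero w.length) (T.regExp_ne_top _),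
      ← mul_assoc, ENNReal.mul_inv_cancel (T.regExp_ne_zero _) (T.regExp_ne_top _), one_mul,
      ENNReal.div_le_iff_le_mul (.inl h0) (.inl (measure_ne_top _ _))]
    rcases le_total w.length v.length with hl | hl
    · refine (h.le_ratio_mul hv hw (cyl_subset_cyl hv hw hl hxv hx) hA hAw).trans ?_
      rw [mul_assoc, mul_assoc]
      gcongr
      exact le_mul_of_one_le_left zero_le (T.one_le_regExp _)
    · refine (h.le_ratio_mul hv hv subset_rfl hA
        (hAw.trans (cyl_subset_cyl hw hv hl hx hxv))).trans ?_
      rw [mul_assoc (T.regExp w.length)]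
      exact le_mul_of_one_le_left zero_le (T.one_le_regExp _)
  calc η A = T.regExp w.length * ((T.regExp w.length)⁻¹ * (η A / T.m₀ A) * T.m₀ A) := by
        rw [mul_assoc, ENNReal.div_mul_cancel h0 (measure_ne_top _ _), ← mul_assoc,
          ENNReal.mul_inv_cancel (T.regExp_ne_zero _) (T.regExp_ne_top _), one_mul]
    _ ≤ _ := by gcongr

lemma Reg.regDensity_le_regDensity {η : Measure Δ₀} (h : T.Reg fun A => η A) {w : List ℕ}
    (hw : T.Admissible w) {x y : Δ₀} (hx : x ∈ T.cyl w) (hy : y ∈ T.cyl w) :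
    T.regDensity η x ≤ T.regExp w.length ^ 2 * T.regDensity η y := by
  have h0 : T.regExp w.length ^ 2 ≠ 0 := pow_ne_zero _ (T.regExp_ne_zero _)
  have ht : T.regExp w.length ^ 2 ≠ ⊤ := ENNReal.pow_ne_top (T.regExp_ne_top _)
  rw [mul_comm, ← ENNReal.div_le_iff_le_mul (.inl h0) (.inl ht)]
  refine le_regDensity fun v hv hyv => ?_
  rw [ENNReal.div_le_iff_le_mul (.inl h0) (.inl ht)]
  rcases le_total w.length v.length with hl | hl
  · have h1 := h.le_ratio_mul hv hw (cyl_subset_cyl hv hw hl hyv hy) (measurableSet_cyl hw)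
      subset_rfl
    have h2 : η (T.cyl w) / T.m₀ (T.cyl w) ≤
        T.regExp w.length * (η (T.cyl v) / T.m₀ (T.cyl v)) :=
      ENNReal.div_le_of_le_mul h1
    calc _ ≤ T.regExp w.length * (η (T.cyl w) / T.m₀ (T.cyl w)) := regDensity_le hw hx
      _ ≤ T.regExp w.length * (T.regExp w.length * (η (T.cyl v) / T.m₀ (T.cyl v))) := by gcongr
      _ ≤ T.regExp v.length *
          (T.regExp w.length * (T.regExp w.length * (η (T.cyl v) / T.m₀ (T.cyl v)))) :=
        le_mul_of_one_le_left zero_le (T.one_le_regExp _)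
      _ = _ := by ring
  · exact (regDensity_le hv (cyl_subset_cyl hw hv hl hy hyv hx)).trans
      (le_mul_of_one_le_right zero_le (one_le_pow₀ (T.one_le_regExp _)))

lemma Reg.withDensity_regDensity {η : Measure Δ₀} [IsFiniteMeasure η] (h : T.Reg fun A => η A) :
    T.m₀.withDensity (T.regDensity η) = η := by
  have hac : T.m₀.withDensity (T.regDensity η) ≪ T.m₀ := withDensity_absolutelyContinuous _ _
  refine Measure.ext fun A hA => le_antisymm ?_ ?_
  · have hk : ∀ k, T.m₀.withDensity (T.regDensity η) A ≤ T.regExp k ^ 2 * η A := fun k => by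
      refine measure_le_of_forall_cyl hac h.absolutelyContinuous k ?_ hA
      rintro w hw rfl A hA hAw
      rw [withDensity_apply _ hA]
      rcases eq_or_ne (T.m₀ A) 0 with h0 | h0
      · rw [Measure.restrict_eq_zero.2 h0]
        simp
      calc _ ≤ ∫⁻ _ in A, T.regExp w.length ^ 2 * η A / T.m₀ A ∂T.m₀ :=
            setLIntegral_mono' hA fun x hx => by
              rw [ENNReal.le_div_iff_mul_le (.inl h0) (.inl (measure_ne_top _ _))]
              exact h.regDensity_mul_le hw (hAw hx) hA hAw
        _ = _ := by
          rw [setLIntegral_const, ENNReal.div_mul_cancel h0 (measure_ne_top _ _)]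
    refine ge_of_tendsto' (x := atTop) ?_ hk
    have := ENNReal.Tendsto.mul_const ((ENNReal.continuous_pow 2).tendsto 1 |>.comp
      T.tendsto_regExp) (.inr (measure_ne_top η A))
    simpa [Function.comp_def] using this
  · have hk : ∀ k, η A ≤ T.regExp k * T.m₀.withDensity (T.regDensity η) A := fun k => by
      refine measure_le_of_forall_cyl h.absolutelyContinuous hac k ?_ hA
      rintro w hw rfl A hA hAw
      rw [withDensity_apply _ hA]
      rcases eq_or_ne (T.m₀ A) 0 with h0 | h0
      · simp [h.absolutelyContinuous h0]
      calc η A = ∫⁻ _ in A, η A / T.m₀ A ∂T.m₀ := by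
            rw [setLIntegral_const, ENNReal.div_mul_cancel h0 (measure_ne_top _ _)]
        _ ≤ ∫⁻ x in A, T.regExp w.length * T.regDensity η x ∂T.m₀ :=
            setLIntegral_mono' hA fun x hx => by
              rw [ENNReal.div_le_iff_le_mul (.inl h0) (.inl (measure_ne_top _ _)), mul_assoc]
              exact h.le_regDensity_mul hw (hAw hx) hA hAw
        _ = _ := lintegral_const_mul _ (measurable_regDensity η)
    refine ge_of_tendsto' (x := atTop) ?_ hk
    simpa using ENNReal.Tendsto.mul_const T.tendsto_regExp
      (b := T.m₀.withDensity (T.regDensity η) A) (.inl one_ne_zero)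

/-- Two-sided bounds for the density of a regular measure. -/
lemma Reg.regDensity_bounds {η : Measure Δ₀} [IsFiniteMeasure η] (h : T.Reg fun A => η A)
    (h0 : η univ ≠ 0) : ∃ a b : ℝ≥0∞, a ≠ 0 ∧ b ≠ ⊤ ∧
      ∀ x, a ≤ T.regDensity η x ∧ T.regDensity η x ≤ b := by
  refine ⟨(T.regExp 0)⁻¹ * (η univ / T.m₀ univ), T.regExp 0 * (η univ / T.m₀ univ), ?_, ?_,
    fun x => ⟨?_, regDensity_le admissible_nil (mem_univ x)⟩⟩
  · exact mul_ne_zero (ENNReal.inv_ne_zero.2 (T.regExp_ne_top _))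
      (ENNReal.div_ne_zero.2 ⟨h0, measure_ne_top _ _⟩)
  · exact ENNReal.mul_ne_top (T.regExp_ne_top _)
      (ENNReal.div_ne_top (measure_ne_top _ _) T.measure_univ_pos.ne')
  · have := h.le_regDensity_mul admissible_nil (mem_univ x) .univ (subset_univ _)
    rw [← ENNReal.mul_le_mul_iff_right (T.regExp_ne_zero 0) (T.regExp_ne_top _),
      ← mul_assoc, ENNReal.mul_inv_cancel (T.regExp_ne_zero _) (T.regExp_ne_top _), one_mul]
    refine ENNReal.div_le_of_le_mul ?_
    rw [mul_assoc]
    exact this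

/-! ### Measures on the tower lifted from the base -/

/-- The trace on the base of the `l`-th level of a subset of the tower. -/
def slice (l : ℕ) (A : Set T.Tower) : Set Δ₀ :=
  {x | ∃ h : l < T.R x, (⟨(x, l), h⟩ : T.Tower) ∈ A}

variable (T) in
/-- The inclusion of the `l`-th level, extended to the whole base. -/
def level (l : ℕ) (x : Δ₀) : T.Tower :=
  if h : l < T.R x then ⟨(x, l), h⟩ else ⟨(x, 0), T.R_pos x⟩

lemma level_of_lt {l : ℕ} {x : Δ₀} (h : l < T.R x) : T.level l x = ⟨(x, l), h⟩ := dif_pos h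

lemma measurableSet_lt_R (T : YoungTower Δ₀) (l : ℕ) : MeasurableSet {x | l < T.R x} :=
  measurableSet_lt measurable_const T.R_meas

lemma measurable_level (l : ℕ) : Measurable (T.level l) := by
  have h : Measurable fun x => (T.level l x).1 := by
    have : (fun x => (T.level l x).1) = fun x => if l < T.R x then (x, l) else (x, 0) := by
      ext1 x
      unfold level
      split_ifs <;> rfl
    rw [this]
    exact Measurable.ite (T.measurableSet_lt_R l) (by fun_prop) (by fun_prop)
  exact h.subtype_mk (h := fun x => (T.level l x).2)

lemma slice_eq (l : ℕ) (A : Set T.Tower) :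
    slice l A = T.level l ⁻¹' A ∩ {x | l < T.R x} := by
  ext x
  constructor
  · rintro ⟨h, hx⟩
    exact ⟨by rwa [mem_preimage, level_of_lt h], h⟩
  · rintro ⟨hx, h⟩
    exact ⟨h, by rwa [mem_preimage, level_of_lt h] at hx⟩

lemma measurableSet_slice (l : ℕ) {A : Set T.Tower} (hA : MeasurableSet A) :
    MeasurableSet (slice l A) := by
  rw [slice_eq]
  exact (measurable_level l hA).inter (T.measurableSet_lt_R l)

variable (T) in
/-- The measure on the tower which on each level is a copy of `μ`. -/
def lift (μ : Measure Δ₀) : Measure T.Tower :=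
  Measure.sum fun l => (μ.restrict {x | l < T.R x}).map (T.level l)

lemma lift_apply (μ : Measure Δ₀) {A : Set T.Tower} (hA : MeasurableSet A) :
    T.lift μ A = ∑' l, μ (slice l A) := by
  rw [lift, Measure.sum_apply _ hA]
  refine tsum_congr fun l => ?_
  rw [Measure.map_apply (measurable_level l) hA,
    Measure.restrict_apply (measurable_level l hA), slice_eq]

lemma towerMeasure_eq_lift (T : YoungTower Δ₀) : T.towerMeasure = T.lift T.m₀ := by
  have hms : MeasurableSet {p : Δ₀ × ℕ | p.2 < T.R p.1} :=
    measurableSet_lt measurable_snd (T.R_meas.comp measurable_fst)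
  refine Measure.ext fun A hA => ?_
  have him : MeasurableSet (Subtype.val '' A) := hms.subtype_image hA
  have hcomap : ∀ μ : Measure (Δ₀ × ℕ),
      μ.comap (Subtype.val : T.Tower → Δ₀ × ℕ) A = μ (Subtype.val '' A) := fun μ =>
    Measure.comap_apply _ Subtype.val_injective (fun s hs => hms.subtype_image hs) μ hA
  rw [lift_apply _ hA, towerMeasure, hcomap, Measure.sum_apply _ him]
  refine tsum_congr fun l => ?_
  rw [Measure.map_apply (by fun_prop) him, Measure.restrict_apply
    ((by fun_prop : Measurable fun x : Δ₀ => (x, l)) him)]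
  congr 1
  ext x
  constructor
  · rintro ⟨⟨⟨p, hp⟩, hpA, rfl⟩, h⟩
    exact ⟨h, hpA⟩
  · rintro ⟨h, hx⟩
    exact ⟨⟨_, hx, rfl⟩, h⟩

lemma lift_withDensity (μ : Measure Δ₀) {g : Δ₀ → ℝ≥0∞} (hg : Measurable g) :
    T.lift (μ.withDensity g) = (T.lift μ).withDensity fun p => g p.1.1 := by
  have hg' : Measurable fun p : T.Tower => g p.1.1 := by fun_prop
  refine Measure.ext fun A hA => ?_
  rw [lift_apply _ hA, withDensity_apply _ hA, ← lintegral_indicator hA, lift,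
    lintegral_sum_measure]
  refine tsum_congr fun l => ?_
  rw [withDensity_apply _ (measurableSet_slice l hA),
    lintegral_map (hg'.indicator hA) (measurable_level l),
    ← lintegral_indicator (measurableSet_slice l hA),
    ← lintegral_indicator (T.measurableSet_lt_R l)]
  refine lintegral_congr fun x => ?_
  by_cases h : l < T.R x
  · have : x ∈ slice l A ↔ T.level l x ∈ A := by simp [slice_eq, h]
    by_cases hx : T.level l x ∈ A
    · simp only [indicator, this, hx, mem_ofPred_eq, h, if_true]
      rw [level_of_lt h]
    · simp [indicator, this, hx]
  · simp [indicator, slice_eq, h]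

lemma lift_absolutelyContinuous {μ μ' : Measure Δ₀} (h : μ ≪ μ') : T.lift μ ≪ T.lift μ' := by
  refine Measure.AbsolutelyContinuous.mk fun A hA h0 => ?_
  rw [lift_apply _ hA, ENNReal.tsum_eq_zero] at h0 ⊢
  exact fun l => h (h0 l)

lemma measurable_towerMap (T : YoungTower Δ₀) : Measurable T.towerMap := by
  have hms : MeasurableSet {p : T.Tower | p.1.2 + 1 < T.R p.1.1} :=
    measurableSet_lt (by fun_prop) (T.R_meas.comp (by fun_prop))
  have h : Measurable fun p => (T.towerMap p).1 := by
    have : (fun p => (T.towerMap p).1) = fun p : T.Tower =>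
        if p.1.2 + 1 < T.R p.1.1 then (p.1.1, p.1.2 + 1) else (T.FR p.1.1, 0) := by
      ext1 p
      unfold towerMap
      split_ifs <;> rfl
    rw [this]
    exact Measurable.ite hms (by fun_prop) ((T.FR_meas.comp (by fun_prop)).prodMk (by fun_prop))
  exact h.subtype_mk (h := fun x => (T.towerMap x).2)

lemma slice_preimage_towerMap (l : ℕ) (A : Set T.Tower) : slice l (T.towerMap ⁻¹' A) =
    slice (l + 1) A ∪ ({x | T.R x = l + 1} ∩ T.FR ⁻¹' slice 0 A) := by
  ext x
  constructor
  · rintro ⟨h, hx⟩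
    rw [mem_preimage, towerMap] at hx
    split_ifs at hx with h'
    · exact .inl ⟨h', hx⟩
    · have h'' : ¬ l + 1 < T.R x := h'
      exact .inr ⟨by simp only [mem_ofPred_eq]; omega, T.R_pos _, hx⟩
  · rintro (⟨h, hx⟩ | ⟨h, h', hx⟩)
    · refine ⟨by omega, ?_⟩
      rw [mem_preimage, towerMap, dif_pos h]
      exact hx
    · rw [mem_ofPred_eq] at h
      refine ⟨by omega, ?_⟩
      rw [mem_preimage, towerMap, dif_neg]
      · exact hx
      · simp only
        omega

lemma measurePreserving_towerMap {η : Measure Δ₀} (h : MeasurePreserving T.FR η η) :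
    MeasurePreserving T.towerMap (T.lift η) (T.lift η) := by
  refine ⟨T.measurable_towerMap, Measure.ext fun A hA => ?_⟩
  rw [Measure.map_apply T.measurable_towerMap hA, lift_apply _ (T.measurable_towerMap hA),
    lift_apply _ hA, tsum_eq_zero_add' (f := fun l => η (slice l A)) ENNReal.summable]
  have hR : ∀ l, MeasurableSet {x | T.R x = l + 1} := fun l =>
    T.R_meas (measurableSet_singleton (l + 1))
  have hF : MeasurableSet (T.FR ⁻¹' slice 0 A) := T.FR_meas (measurableSet_slice 0 hA)
  have h1 : ∀ l, η (slice l (T.towerMap ⁻¹' A)) =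
      η (slice (l + 1) A) + η ({x | T.R x = l + 1} ∩ T.FR ⁻¹' slice 0 A) := fun l => by
    rw [slice_preimage_towerMap, measure_union _ ((hR l).inter hF)]
    refine disjoint_left.2 ?_
    rintro x ⟨hx, -⟩ ⟨hx', -⟩
    rw [mem_ofPred_eq] at hx'
    omega
  have h2 : η (slice 0 A) = ∑' l, η ({x | T.R x = l + 1} ∩ T.FR ⁻¹' slice 0 A) := by
    rw [← h.measure_preimage (measurableSet_slice 0 hA).nullMeasurableSet, ← measure_iUnion]
    · congr 1
      ext x
      simp only [mem_iUnion, mem_inter_iff, mem_ofPred_eq, exists_and_right]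
      refine ⟨fun hx => ⟨⟨T.R x - 1, ?_⟩, hx⟩, fun hx => hx.2⟩
      have := T.R_pos x
      omega
    · intro k l hkl
      refine disjoint_left.2 ?_
      rintro x ⟨hx, -⟩ ⟨hx', -⟩
      rw [mem_ofPred_eq] at hx hx'
      omega
    · exact fun l => (hR l).inter hF
  simp only [h1]
  rw [ENNReal.tsum_add, ← h2, add_comm]

lemma lift_univ (μ : Measure Δ₀) : T.lift μ univ = ∑' l, μ {x | l < T.R x} := by
  rw [lift_apply _ .univ]
  refine tsum_congr fun l => ?_
  rw [slice_eq, preimage_univ, univ_inter]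

lemma tsum_measure_lt_R (μ : Measure Δ₀) :
    ∑' l, μ {x | l < T.R x} = ∫⁻ x, (T.R x : ℝ≥0∞) ∂μ := by
  have h : ∀ x, (T.R x : ℝ≥0∞) = ∑' l, {x | l < T.R x}.indicator (fun _ => (1 : ℝ≥0∞)) x := by
    intro x
    rw [tsum_eq_sum (s := Finset.range (T.R x))]
    · rw [Finset.sum_congr rfl (g := fun _ => (1 : ℝ≥0∞))]
      · simp
      · intro l hl
        simp [Finset.mem_range.1 hl]
    · intro l hl
      simpa using hl
  simp only [h]
  rw [lintegral_tsum fun l =>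
    (measurable_const.indicator (T.measurableSet_lt_R l)).aemeasurable]
  exact tsum_congr fun l => by rw [lintegral_indicator_const (T.measurableSet_lt_R l), one_mul]

/-- The normalised invariant measure of the return map. -/
lemma exists_normalized_base (hR : Integrable (fun x => (T.R x : ℝ)) T.m₀) :
    ∃ η : Measure Δ₀, IsFiniteMeasure η ∧ η univ ≠ 0 ∧ (T.Reg fun A => η A) ∧
      MeasurePreserving T.FR η η ∧ T.lift η univ = 1 := by
  obtain ⟨η, hu, hreg, hη⟩ := T.exists_invariant_base
  have hle : ∀ A, MeasurableSet A → η A ≤ T.regExp 0 * T.m₀ A := fun A hA => by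
    have h := hreg.mul_le hA
    simp only [hu] at h
    rw [← ENNReal.mul_le_mul_iff_left T.measure_univ_pos.ne' (measure_ne_top _ _)]
    exact h.trans_eq (by ring)
  have hfin : T.lift η univ ≠ ⊤ := by
    rw [lift_univ]
    refine ne_top_of_le_ne_top ?_
      (ENNReal.tsum_le_tsum fun l => hle _ (T.measurableSet_lt_R l))
    rw [ENNReal.tsum_mul_left, tsum_measure_lt_R]
    refine ENNReal.mul_ne_top (T.regExp_ne_top _) ?_
    have := hR.2
    simp only [hasFiniteIntegral_iff_enorm] at this
    refine ne_of_lt (lt_of_le_of_lt (le_of_eq (lintegral_congr fun x => ?_)) this)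
    simp [Real.enorm_natCast]
  have h0 : T.lift η univ ≠ 0 := by
    rw [lift_univ]
    intro h
    rw [ENNReal.tsum_eq_zero] at h
    have h' := h 0
    simp only [T.R_pos, ofPred_true, hu] at h'
    exact T.measure_univ_pos.ne' h'
  have hi : (T.lift η univ)⁻¹ ≠ ⊤ := ENNReal.inv_ne_top.2 h0
  have hi0 : (T.lift η univ)⁻¹ ≠ 0 := ENNReal.inv_ne_zero.2 hfin
  have huniv : η univ ≠ 0 := by rw [hu]; exact T.measure_univ_pos.ne'
  refine ⟨(T.lift η univ)⁻¹ • η, ⟨?_⟩, ?_, hreg.const_mul _, hη.smul_measure _, ?_⟩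
  · rw [Measure.smul_apply, hu, smul_eq_mul]
    exact ENNReal.mul_lt_top hi.lt_top (measure_lt_top _ _)
  · rw [Measure.smul_apply, smul_eq_mul]
    exact mul_ne_zero hi0 huniv
  · rw [lift_univ]
    simp only [Measure.smul_apply, smul_eq_mul]
    rw [ENNReal.tsum_mul_left, ← lift_univ, ENNReal.inv_mul_cancel h0 hfin]

/-! ### Regularity of the lifted density -/

lemma abs_sub_one_le {t u : ℝ} (hu : 0 ≤ u) (h1 : t ≤ Real.exp u) (h2 : 1 ≤ Real.exp u * t) :
    |t - 1| ≤ u * Real.exp u := by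
  have he : 1 ≤ Real.exp u := Real.one_le_exp hu
  have h3 : -u + 1 ≤ Real.exp (-u) := Real.add_one_le_exp _
  have h4 : Real.exp u * Real.exp (-u) = 1 := by rw [← Real.exp_add]; simp
  have h5 : Real.exp (-u) ≤ t := by
    by_contra! hlt
    nlinarith [mul_lt_mul_of_pos_left hlt (Real.exp_pos u)]
  rw [abs_le]
  constructor
  · nlinarith
  · nlinarith

lemma abs_div_sub_one_le {g : Δ₀ → ℝ} {K : ℝ} (hK : 0 < K) (hpos : ∀ x, 0 < g x)
    (hg : ∀ w, T.Admissible w → ∀ x ∈ T.cyl w, ∀ y ∈ T.cyl w,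
      g x ≤ Real.exp (K * T.β ^ w.length) * g y) (x y : Δ₀) :
    |g x / g y - 1| ≤ K * Real.exp K * epow T.β (T.sep x y) := by
  have hk : ∀ k : ℕ, (k : ℕ∞) ≤ T.sep x y → |g x / g y - 1| ≤ K * Real.exp K * T.β ^ k := by
    intro k hk
    obtain ⟨w, hw, rfl, hx, hy⟩ := le_sep_iff_exists_cyl.1 hk
    have hβ := pow_pos T.β_pos w.length
    have hβ' : T.β ^ w.length ≤ 1 := pow_le_one₀ T.β_pos.le T.β_lt_one.le
    have h1 := hg w hw x hx y hy
    have h2 := hg w hw y hy x hx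
    refine (abs_sub_one_le (mul_pos hK hβ).le ((div_le_iff₀ (hpos y)).2 h1) ?_).trans ?_
    · rw [← mul_div_assoc, le_div_iff₀ (hpos y), one_mul]
      exact h2
    · have : Real.exp (K * T.β ^ w.length) ≤ Real.exp K := by
        rw [Real.exp_le_exp]
        nlinarith
      calc _ ≤ K * T.β ^ w.length * Real.exp K := by gcongr
        _ = _ := by ring
  unfold epow
  split_ifs with hs
  · rw [mul_zero]
    refine ge_of_tendsto' (x := atTop) ?_ fun k => hk k (by rw [hs]; exact le_top)
    simpa using (tendsto_pow_atTop_nhds_zero_of_lt_one T.β_pos.le T.β_lt_one).const_mul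
      (K * Real.exp K)
  · exact hk _ (ENat.natCast_toNat hs).le

lemma memFplus_of_base {g : Δ₀ → ℝ} {K a b : ℝ} (hK : 0 < K) (ha : 0 < a)
    (hab : ∀ x, a ≤ g x ∧ g x ≤ b)
    (hg : ∀ w, T.Admissible w → ∀ x ∈ T.cyl w, ∀ y ∈ T.cyl w,
      g x ≤ Real.exp (K * T.β ^ w.length) * g y) :
    T.memFplus fun p => g p.1.1 := by
  have hpos : ∀ x, 0 < g x := fun x => ha.trans_le (hab x).1
  have key := abs_div_sub_one_le hK hpos hg
  have hC : 0 < K * Real.exp K := mul_pos hK (Real.exp_pos _)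
  refine ⟨⟨|b| * (K * Real.exp K) + |b| + 1, by positivity, fun p q => ?_⟩, K * Real.exp K, hC,
    fun l i hi => .inr ⟨fun p _ => hpos _, fun p hp q hq => ?_⟩⟩
  · have hb : ∀ x, g x ≤ |b| := fun x => (hab x).2.trans (le_abs_self b)
    unfold sepTower
    split_ifs with hs
    · have h1 : |g p.1.1 - g q.1.1| = g q.1.1 * |g p.1.1 / g q.1.1 - 1| := by
        rw [← abs_of_pos (hpos q.1.1), ← abs_mul, abs_of_pos (hpos q.1.1), mul_sub, mul_one,
          mul_div_cancel₀ _ (hpos _).ne']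
      have h0 : 0 ≤ epow T.β (T.sep p.1.1 q.1.1) :=
        nonneg_of_mul_nonneg_right ((abs_nonneg _).trans (key p.1.1 q.1.1)) hC
      rw [h1]
      calc _ ≤ |b| * (K * Real.exp K * epow T.β (T.sep p.1.1 q.1.1)) :=
            mul_le_mul (hb _) (key _ _) (abs_nonneg _) (abs_nonneg _)
        _ ≤ _ := by nlinarith [abs_nonneg b, mul_nonneg (abs_nonneg b) h0]
    · have h1 : |g p.1.1 - g q.1.1| ≤ |b| := by
        rw [abs_le]
        constructor <;> linarith [hb p.1.1, hb q.1.1, hpos p.1.1, hpos q.1.1]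
      have h2 : epow T.β 0 = 1 := by simp [epow]
      rw [h2]
      nlinarith [mul_nonneg (abs_nonneg b) hC.le]
  · have hs : T.samePiece p q := ⟨l, i, hi, hp, hq⟩
    simp only [sepTower, hs, if_true]
    exact key _ _

/-- The lift of a regular measure has a density in `F_β⁺`, bounded away from zero. -/
lemma Reg.exists_density_lift {η : Measure Δ₀} [IsFiniteMeasure η] (h : T.Reg fun A => η A)
    (h0 : η univ ≠ 0) : ∃ ρ : T.Tower → ℝ, Measurable ρ ∧
      T.lift η = T.towerMeasure.withDensity (fun p => ENNReal.ofReal (ρ p)) ∧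
      T.memFplus ρ ∧ ∃ c : ℝ, 0 < c ∧ ∀ p, c ≤ ρ p := by
  obtain ⟨a, b, ha, hb, hab⟩ := h.regDensity_bounds h0
  have hm := measurable_regDensity (T := T) η
  have ht : ∀ x, T.regDensity η x ≠ ⊤ := fun x => ne_top_of_le_ne_top hb (hab x).2
  obtain ⟨x₀, -⟩ := nonempty_of_measure_ne_zero h0
  have hta : a ≠ ⊤ := ne_top_of_le_ne_top (ht x₀) (hab x₀).1
  have ha' : 0 < a.toReal := ENNReal.toReal_pos ha hta
  have hbd : ∀ x, a.toReal ≤ (T.regDensity η x).toReal ∧ (T.regDensity η x).toReal ≤ b.toReal :=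
    fun x => ⟨ENNReal.toReal_mono (ht x) (hab x).1, ENNReal.toReal_mono hb (hab x).2⟩
  refine ⟨fun p => (T.regDensity η p.1.1).toReal, by fun_prop, ?_, ?_, a.toReal, ha',
    fun p => (hbd _).1⟩
  · rw [towerMeasure_eq_lift]
    conv_lhs => rw [← h.withDensity_regDensity]
    rw [lift_withDensity _ hm]
    congr 1
    ext1 p
    rw [ENNReal.ofReal_toReal (ht _)]
  · refine memFplus_of_base (g := fun x => (T.regDensity η x).toReal)
      (mul_pos two_pos T.regConst_pos) ha' hbd fun w hw x hx y hy => ?_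
    have h1 := h.regDensity_le_regDensity hw hx hy
    have h2 := ENNReal.toReal_mono
      (ENNReal.mul_ne_top (ENNReal.pow_ne_top (T.regExp_ne_top _)) (ht y)) h1
    rw [ENNReal.toReal_mul, ENNReal.toReal_pow, regExp,
      ENNReal.toReal_ofReal (Real.exp_pos _).le, ← Real.exp_nat_mul] at h2
    refine h2.trans_eq ?_
    congr 2
    push_cast
    ring

end YoungTower

/-! ### Weak limits along ultrafilters in a Hilbert space -/

section Hilbert

variable {E : Type*} [NormedAddCommGroup E] [InnerProductSpace ℝ E] [CompleteSpace E]

/-- A bounded sequence in a Hilbert space converges weakly along every ultrafilter. -/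
lemma exists_weak_limit_ultrafilter {ι : Type*} {b : ι → E} {C : ℝ} (hb : ∀ n, ‖b n‖ ≤ C)
    (𝓤 : Ultrafilter ι) :
    ∃ h : E, ∀ v, Tendsto (fun n => inner ℝ (b n) v) 𝓤 (𝓝 (inner ℝ h v)) := by
  have hbd : ∀ v n, inner ℝ (b n) v ∈ Icc (-(C * ‖v‖)) (C * ‖v‖) := fun v n =>
    abs_le.1 ((abs_real_inner_le_norm _ _).trans
      (mul_le_mul_of_nonneg_right (hb n) (norm_nonneg _)))
  have hlim : ∀ v, ∃ a ∈ Icc (-(C * ‖v‖)) (C * ‖v‖),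
      Tendsto (fun n => inner ℝ (b n) v) 𝓤 (𝓝 a) := fun v =>
    isCompact_Icc.ultrafilter_le_nhds (𝓤.map fun n => inner ℝ (b n) v)
      (le_principal_iff.2 (mem_map.2 (univ_mem' (hbd v))))
  choose L hL hLt using hlim
  let f : E →ₗ[ℝ] ℝ :=
    { toFun := L
      map_add' := fun u v => by
        refine tendsto_nhds_unique (hLt (u + v)) ?_
        simp only [inner_add_right]
        exact (hLt u).add (hLt v)
      map_smul' := fun c v => by
        refine tendsto_nhds_unique (hLt (c • v)) ?_
        simp only [inner_smul_right, RingHom.id_apply, smul_eq_mul]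
        exact (hLt v).const_mul c }
  let g : E →L[ℝ] ℝ := f.mkContinuous C fun v => abs_le.2 (hL v)
  refine ⟨(InnerProductSpace.toDual ℝ E).symm g, fun v => ?_⟩
  rw [InnerProductSpace.toDual_symm_apply]
  exact hLt v

/-- For an isometry `U`, the weak limits `h j` of `(U†)^(n + j) g` form a backward orbit. -/
lemma exists_backward_orbit (U : E →ₗᵢ[ℝ] E) (g : E) (𝓤 : Ultrafilter ℕ)
    (h𝓤 : (𝓤 : Filter ℕ) ≤ atTop) :
    ∃ h : ℤ → E, (∀ j v, Tendsto (fun n : ℕ => inner ℝ g (U^[((n : ℤ) + j).toNat] v)) 𝓤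
      (𝓝 (inner ℝ (h j) v))) ∧ ∀ j, h j = U (h (j + 1)) := by
  set P : E →L[ℝ] E := ContinuousLinearMap.adjoint U.toContinuousLinearMap with hP
  have hPU : ∀ x y, inner ℝ (P x) y = inner ℝ x (U y) := fun x y =>
    ContinuousLinearMap.adjoint_inner_left _ _ _
  have hdefect : ∀ x, ‖x - U (P x)‖ ^ 2 = ‖x‖ ^ 2 - ‖P x‖ ^ 2 := fun x => by
    rw [norm_sub_sq_real, ← hPU, real_inner_self_eq_norm_sq, U.norm_map]
    ring
  have hPn : ∀ n x y, inner ℝ (P^[n] x) y = inner ℝ x (U^[n] y) := by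
    intro n
    induction n with
    | zero => simp
    | succ n ih =>
      intro x y
      rw [Function.iterate_succ_apply', hPU, ih, Function.iterate_succ_apply]
  set a : ℕ → E := fun n => P^[n] g with ha
  have ha1 : ∀ n, a (n + 1) = P (a n) := fun n => Function.iterate_succ_apply' _ _ _
  have hanti : Antitone fun n => ‖a n‖ ^ 2 := antitone_nat_of_succ_le fun n => by
    have := hdefect (a n)
    rw [← ha1] at this
    nlinarith [sq_nonneg ‖a n - U (a (n + 1))‖]
  have hbound : ∀ n, ‖a n‖ ≤ ‖g‖ := fun n =>
    (pow_le_pow_iff_left₀ (norm_nonneg _) (norm_nonneg _) two_ne_zero).1 (hanti (Nat.zero_le n))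
  have hconv : Tendsto (fun n => ‖a n‖ ^ 2) atTop (𝓝 (⨅ n, ‖a n‖ ^ 2)) :=
    tendsto_atTop_ciInf hanti ⟨0, by rintro _ ⟨n, rfl⟩; positivity⟩
  have hdiff : Tendsto (fun n => ‖a n - U (a (n + 1))‖) atTop (𝓝 0) := by
    have h1 := hconv.sub ((tendsto_add_atTop_iff_nat 1).2 hconv)
    have h2 : Tendsto (fun n => ‖a n - U (a (n + 1))‖ ^ 2) atTop (𝓝 0) := by
      simpa only [sub_self, ha1, hdefect] using h1
    simpa [Function.comp_def, Real.sqrt_sq] using (Real.continuous_sqrt.tendsto 0).comp h2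
  choose h hh using fun j : ℤ =>
    exists_weak_limit_ultrafilter (b := fun n : ℕ => a ((n : ℤ) + j).toNat)
      (fun n => hbound _) 𝓤
  refine ⟨h, fun j v => ?_, fun j => ext_inner_right ℝ fun v => ?_⟩
  · simpa only [ha, hPn] using hh j v
  · have htoNat : Tendsto (fun n : ℕ => ((n : ℤ) + j).toNat) atTop atTop :=
      tendsto_atTop_mono (f := fun n : ℕ => n - j.natAbs) (fun n => by omega)
        (tendsto_sub_atTop_nat _)
    have h1 : Tendsto (fun n : ℕ => inner ℝ (U (a (((n : ℤ) + j).toNat + 1))) v) 𝓤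
        (𝓝 (inner ℝ (U (h (j + 1))) v)) := by
      have h2 := hh (j + 1) (P v)
      have h3 : ∀ x, inner ℝ x (P v) = inner ℝ (U x) v := fun x => by
        rw [real_inner_comm, hPU, real_inner_comm]
      simp only [h3] at h2
      refine h2.congr' (h𝓤 ?_)
      filter_upwards [eventually_ge_atTop j.natAbs] with n hn
      rw [show ((n : ℤ) + (j + 1)).toNat = ((n : ℤ) + j).toNat + 1 by omega]
    have h4 : Tendsto (fun n : ℕ => inner ℝ (a ((n : ℤ) + j).toNat) v -
        inner ℝ (U (a (((n : ℤ) + j).toNat + 1))) v) 𝓤 (𝓝 0) := by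
      refine squeeze_zero_norm (fun n => ?_)
        ((((hdiff.comp htoNat).mono_left h𝓤).mul_const ‖v‖).trans_eq (by rw [zero_mul]))
      rw [← inner_sub_left]
      exact norm_inner_le_norm _ _
    exact sub_eq_zero.1 (tendsto_nhds_unique ((hh j v).sub h1) h4)

end Hilbert

/-- Weak limits of the transfer operator iterates of an indicator function. -/
lemma exists_backward_densities {α : Type*} [MeasurableSpace α] {ν : Measure α}
    [IsProbabilityMeasure ν] {F : α → α} (hF : MeasurePreserving F ν ν) {B : Set α}
    (hB : MeasurableSet B) (𝓤 : Ultrafilter ℕ) (h𝓤 : (𝓤 : Filter ℕ) ≤ atTop) :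
    ∃ h : ℤ → α → ℝ, (∀ j, Measurable (h j)) ∧ (∀ j, Integrable (h j) ν) ∧
      (∀ j A, MeasurableSet A →
        Tendsto (fun n : ℕ => ν.real (F^[((n : ℤ) + j).toNat] ⁻¹' A ∩ B)) 𝓤
          (𝓝 (∫ x in A, h j x ∂ν))) ∧
      ∀ j, h j =ᵐ[ν] h (j + 1) ∘ F := by
  let U : Lp ℝ 2 ν →ₗᵢ[ℝ] Lp ℝ 2 ν := Lp.compMeasurePreservingₗᵢ ℝ F hF
  have hUn : ∀ n (A : Set α) (hA : MeasurableSet A),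
      U^[n] (indicatorConstLp 2 hA (measure_ne_top ν A) (1 : ℝ)) =
        indicatorConstLp 2 (hF.measurable.iterate n hA) (measure_ne_top ν _) (1 : ℝ) := by
    intro n
    induction n with
    | zero => intro A hA; rfl
    | succ n ih =>
      intro A hA
      rw [Function.iterate_succ_apply', ih A hA]
      exact Lp.indicatorConstLp_compMeasurePreserving (hF.measurable.iterate n hA) _ _ hF
  obtain ⟨h, h1, h2⟩ := exists_backward_orbit U
    (indicatorConstLp 2 hB (measure_ne_top ν B) (1 : ℝ)) 𝓤 h𝓤
  refine ⟨fun j => h j, fun j => (Lp.stronglyMeasurable (h j)).measurable,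
    fun j => (Lp.memLp (h j)).integrable one_le_two, fun j A hA => ?_, fun j => ?_⟩
  · have h3 := h1 j (indicatorConstLp 2 hA (measure_ne_top ν A) (1 : ℝ))
    rw [real_inner_comm, L2.inner_indicatorConstLp_one] at h3
    refine h3.congr fun n => ?_
    rw [hUn, L2.real_inner_indicatorConstLp_one_indicatorConstLp_one, inter_comm]
  · show (h j : α → ℝ) =ᵐ[ν] (h (j + 1) : α → ℝ) ∘ F
    rw [h2 j]
    exact Lp.coeFn_compMeasurePreserving (h (j + 1)) hF

namespace YoungTower

variable {Δ₀ : Type*} [MeasurableSpace Δ₀] {T : YoungTower Δ₀}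

/-! ### Orbits through the base -/

lemma towerMap_level_of_lt {l : ℕ} {x : Δ₀} (h : l + 1 < T.R x) :
    T.towerMap (T.level l x) = T.level (l + 1) x := by
  rw [level_of_lt (by omega), level_of_lt h, towerMap, dif_pos h]

lemma towerMap_level_of_eq {l : ℕ} {x : Δ₀} (h : l + 1 = T.R x) :
    T.towerMap (T.level l x) = T.level 0 (T.FR x) := by
  rw [level_of_lt (by omega), level_of_lt (T.R_pos _), towerMap, dif_neg]
  simp only
  omega

lemma iterate_level_zero {l : ℕ} {x : Δ₀} (h : l < T.R x) :
    T.towerMap^[l] (T.level 0 x) = T.level l x := by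
  induction l with
  | zero => rfl
  | succ l ih => rw [Function.iterate_succ_apply', ih (by omega), towerMap_level_of_lt h]

lemma iterate_return {n : ℕ} {x : Δ₀} (h : n = T.R x) :
    T.towerMap^[n] (T.level 0 x) = T.level 0 (T.FR x) := by
  have hp := T.R_pos x
  obtain ⟨l, rfl⟩ : ∃ l, n = l + 1 := ⟨n - 1, by omega⟩
  rw [Function.iterate_succ_apply', iterate_level_zero (by omega), towerMap_level_of_eq h]

/-- The part of a set over `A` in the `l`-th level of the tower. -/
def levelSet (T : YoungTower Δ₀) (l : ℕ) (A : Set Δ₀) : Set T.Tower :=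
  {p | p.1.2 = l ∧ p.1.1 ∈ A}

lemma measurableSet_levelSet (l : ℕ) {A : Set Δ₀} (hA : MeasurableSet A) :
    MeasurableSet (T.levelSet l A) :=
  (measurableSet_eq_fun (by fun_prop : Measurable fun p : T.Tower => p.1.2)
    measurable_const).inter ((by fun_prop : Measurable fun p : T.Tower => p.1.1) hA)

lemma level_mem_levelSet {k l : ℕ} {x : Δ₀} (h : k < T.R x) {A : Set Δ₀} :
    T.level k x ∈ T.levelSet l A ↔ k = l ∧ x ∈ A := by
  rw [level_of_lt h]
  rfl

variable (T) in
/-- The points of the base whose `n`-th iterate under the tower map lies over `A` in the base. -/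
def hit (n : ℕ) (A : Set Δ₀) : Set Δ₀ :=
  (fun x => T.towerMap^[n] (T.level 0 x)) ⁻¹' T.levelSet 0 A

lemma measurableSet_hit (n : ℕ) {A : Set Δ₀} (hA : MeasurableSet A) :
    MeasurableSet (T.hit n A) :=
  (T.measurable_towerMap.iterate n).comp (measurable_level 0) (measurableSet_levelSet 0 hA)

lemma hit_zero (A : Set Δ₀) : T.hit 0 A = A := by
  ext x
  simp [hit, level_mem_levelSet (T.R_pos x)]

lemma notMem_hit {n : ℕ} {x : Δ₀} (hn : n ≠ 0) (h : n < T.R x) (A : Set Δ₀) :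
    x ∉ T.hit n A := by
  rw [hit, mem_preimage, iterate_level_zero h, level_mem_levelSet h]
  exact fun h => hn h.1

lemma mem_hit_iff {n r : ℕ} {x : Δ₀} (hr : r = T.R x) (hn : r ≤ n) (A : Set Δ₀) :
    x ∈ T.hit n A ↔ T.FR x ∈ T.hit (n - r) A := by
  obtain ⟨k, rfl⟩ := Nat.exists_eq_add_of_le' hn
  rw [hit, mem_preimage, Function.iterate_add_apply, iterate_return hr, Nat.add_sub_cancel]
  rfl

lemma branch_apply {σ : Measure Δ₀} {i : ℕ} {A : Set Δ₀} (hA : MeasurableSet A) :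
    (σ.restrict (T.Λ i)).map T.FR A = σ (T.Λ i ∩ T.FR ⁻¹' A) := by
  rw [Measure.map_apply T.FR_meas hA, Measure.restrict_apply (T.FR_meas hA), inter_comm]

lemma Reg.branch_measure {σ : Measure Δ₀} (h : T.Reg fun A => σ A) {i : ℕ} (hi : i ∈ T.I) :
    T.Reg fun A => (σ.restrict (T.Λ i)).map T.FR A :=
  (h.branch hi).congr fun _ hA => branch_apply hA

lemma Λ_inter_hit {i n : ℕ} (hi : i ∈ T.I) (hn : T.Ret i ≤ n) (A : Set Δ₀) :
    T.Λ i ∩ T.hit n A = T.Λ i ∩ T.FR ⁻¹' T.hit (n - T.Ret i) A := by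
  ext x
  refine and_congr_right fun hx => ?_
  rw [mem_hit_iff (T.R_eq i hi x hx).symm hn]
  rfl

/-- The base part of the image of a regular measure under an iterate of the tower map is
regular. -/
lemma Reg.hit (n : ℕ) : ∀ {σ : Measure Δ₀}, (T.Reg fun A => σ A) →
    T.Reg fun A => σ (T.hit n A) := by
  induction n using Nat.strong_induction_on with
  | _ n ih =>
    intro σ h
    rcases Nat.eq_zero_or_pos n with rfl | hn
    · simpa only [hit_zero] using h
    refine (Reg.tsum (φ := fun (i : T.I) A => σ (T.Λ i ∩ T.hit n A)) fun i => ?_).congr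
      fun A hA => measure_eq_tsum_Λ h.absolutelyContinuous (measurableSet_hit n hA)
    rcases le_or_gt (T.Ret i) n with hi | hi
    · have hlt : n - T.Ret i < n := Nat.sub_lt hn (T.Ret_pos i i.2)
      refine (ih _ hlt (h.branch_measure i.2)).congr fun A hA => ?_
      rw [branch_apply (measurableSet_hit _ hA), Λ_inter_hit i.2 hi]
    · refine reg_zero.congr fun A _ => ?_
      rw [eq_empty_of_forall_notMem (s := T.Λ i ∩ T.hit n A), measure_empty]
      rintro x ⟨hx, hx'⟩
      exact notMem_hit hn.ne' (by rwa [T.R_eq i i.2 x hx]) A hx'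

lemma Reg.cyl_inter_hit {w : List ℕ} (hw : T.Admissible w) :
    ∃ N, ∀ n ≥ N, ∀ {σ : Measure Δ₀}, (T.Reg fun A => σ A) →
      T.Reg fun A => σ (T.cyl w ∩ T.hit n A) := by
  induction w with
  | nil =>
    refine ⟨0, fun n _ σ h => ?_⟩
    simpa only [cyl, univ_inter] using Reg.hit n h
  | cons i w ih =>
    rw [admissible_cons] at hw
    obtain ⟨N, hN⟩ := ih hw.2
    refine ⟨N + T.Ret i, fun n hn σ h => ?_⟩
    refine (hN (n - T.Ret i) (by omega) (h.branch_measure hw.1)).congr fun A hA => ?_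
    rw [branch_apply ((measurableSet_cyl hw.2).inter (measurableSet_hit _ hA)),
      preimage_inter, cyl, inter_right_comm, Λ_inter_hit hw.1 (by omega), inter_right_comm,
      inter_assoc]

/-! ### Null sets and integrals on the tower -/

lemma slice_levelSet_inter (S : Set T.Tower) (k l : ℕ) (A : Set Δ₀) :
    slice k (S ∩ T.levelSet l A) = if k = l then slice l S ∩ A else ∅ := by
  split_ifs with h
  · subst h
    ext x
    exact ⟨fun ⟨h, hS, hA⟩ => ⟨⟨h, hS⟩, hA.2⟩, fun ⟨⟨h, hS⟩, hA⟩ => ⟨h, hS, rfl, hA⟩⟩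
  · exact eq_empty_of_forall_notMem fun x ⟨_, _, hA⟩ => h hA.1

lemma lift_inter_levelSet (η : Measure Δ₀) {S : Set T.Tower} (hS : MeasurableSet S) (l : ℕ)
    {A : Set Δ₀} (hA : MeasurableSet A) :
    T.lift η (S ∩ T.levelSet l A) = η (slice l S ∩ A) := by
  rw [lift_apply _ (hS.inter (measurableSet_levelSet l hA)), tsum_eq_single l]
  · rw [slice_levelSet_inter, if_pos rfl]
  · intro k hk
    rw [slice_levelSet_inter, if_neg hk, measure_empty]

lemma slice_zero (S : Set T.Tower) : slice 0 S = T.level 0 ⁻¹' S := by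
  rw [slice_eq]
  exact inter_eq_left.2 fun x _ => T.R_pos x

lemma setIntegral_levelSet_zero (η : Measure Δ₀) {f : T.Tower → ℝ} (hf : Measurable f)
    {A : Set Δ₀} (hA : MeasurableSet A) :
    ∫ p in T.levelSet 0 A, f p ∂T.lift η = ∫ x in A, f (T.level 0 x) ∂η := by
  have : (T.lift η).restrict (T.levelSet 0 A) = (η.restrict A).map (T.level 0) := by
    refine Measure.ext fun S hS => ?_
    rw [Measure.restrict_apply hS, lift_inter_levelSet η hS 0 hA,
      Measure.map_apply (measurable_level 0) hS,
      Measure.restrict_apply (measurable_level 0 hS), slice_zero]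
  rw [this, integral_map (measurable_level 0).aemeasurable hf.aestronglyMeasurable]

lemma ae_lift_iff {η : Measure Δ₀} {P : T.Tower → Prop} (hP : MeasurableSet {p | P p}) :
    (∀ᵐ p ∂T.lift η, P p) ↔ ∀ l, ∀ᵐ x ∂η, l < T.R x → P (T.level l x) := by
  have hP' : MeasurableSet {p | ¬ P p} := hP.compl
  rw [ae_iff, lift_apply _ hP', ENNReal.tsum_eq_zero]
  refine forall_congr' fun l => ?_
  rw [ae_iff]
  have : slice l {p | ¬ P p} = {x | ¬ (l < T.R x → P (T.level l x))} := by
    rw [slice_eq]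
    ext x
    simp only [mem_inter_iff, mem_preimage, mem_ofPred_eq]
    tauto
  rw [← this]

lemma ae_lift_of_ae {η : Measure Δ₀} {P : Δ₀ → Prop} (h : ∀ᵐ x ∂η, P x) :
    ∀ᵐ p ∂T.lift η, P p.1.1 := by
  have hm := measurableSet_toMeasurable η {x | ¬ P x}
  have h' : ∀ᵐ p ∂T.lift η, p.1.1 ∉ toMeasurable η {x | ¬ P x} := by
    refine (ae_lift_iff ((by fun_prop : Measurable fun p : T.Tower => p.1.1) hm.compl)).2
      fun l => ?_
    have h0 : ∀ᵐ x ∂η, x ∉ toMeasurable η {x | ¬ P x} :=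
      measure_eq_zero_iff_ae_notMem.1 ((measure_toMeasurable _).trans h)
    filter_upwards [h0] with x hx hl
    rw [level_of_lt hl]
    exact hx
  filter_upwards [h'] with p hp
  by_contra hc
  exact hp (subset_toMeasurable _ _ hc)

/-! ### Backward orbits of regular densities are constant -/

lemma Reg.eq_zero {φ : Set Δ₀ → ℝ≥0∞} (h : T.Reg φ) {A : Set Δ₀} (hA : MeasurableSet A)
    (h0 : T.m₀ A = 0) : φ A = 0 := by
  have := h.mul_le hA
  rw [h0] at this
  simpa [T.measure_univ_pos.ne'] using this

lemma Reg.compare {φ ψ : Set Δ₀ → ℝ≥0∞} (hφ : T.Reg φ) (hψ : T.Reg ψ) {w : List ℕ}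
    (hw : T.Admissible w) {A B : Set Δ₀} (hA : MeasurableSet A) (hB : MeasurableSet B)
    (hAw : A ⊆ T.cyl w) (hBw : B ⊆ T.cyl w) :
    φ A * ψ B ≤ T.regExp w.length ^ 2 * (φ B * ψ A) := by
  rcases eq_or_ne (T.m₀ A) 0 with h0 | h0
  · simp [hφ.eq_zero hA h0]
  rcases eq_or_ne (T.m₀ B) 0 with h1 | h1
  · simp [hψ.eq_zero hB h1]
  have h := mul_le_mul' (hφ w hw A B hA hB hAw hBw) (hψ w hw B A hB hA hBw hAw)
  rw [← ENNReal.mul_le_mul_iff_left (mul_ne_zero h0 h1)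
    (ENNReal.mul_ne_top (measure_ne_top _ _) (measure_ne_top _ _))]
  calc _ = φ A * T.m₀ B * (ψ B * T.m₀ A) := by ring
    _ ≤ _ := h
    _ = _ := by ring

lemma measure_cyl_inter_iterate_eq_zero_iff {w : List ℕ} (hw : T.Admissible w) {A : Set Δ₀}
    (hA : MeasurableSet A) : T.m₀ (T.cyl w ∩ T.FR^[w.length] ⁻¹' A) = 0 ↔ T.m₀ A = 0 := by
  induction w with
  | nil => simp [cyl]
  | cons i w ih =>
    rw [admissible_cons] at hw
    rw [← ih hw.2, ← measure_branch_eq_zero_iff hw.1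
      ((measurableSet_cyl hw.2).inter (T.FR_meas.iterate _ hA)), preimage_inter, ← inter_assoc]
    rfl

lemma exists_const_of_periods (T : YoungTower Δ₀) {c : ℤ → ℝ}
    (h : ∀ i ∈ T.I, ∀ j, c j = c (j + T.Ret i)) (j : ℤ) : c j = c 0 := by
  let G : AddSubgroup ℤ :=
    { carrier := {r | ∀ j, c j = c (j + r)}
      zero_mem' := fun j => by simp
      add_mem' := fun {a b} ha hb j => by rw [ha j, hb (j + a), add_assoc]
      neg_mem' := fun {a} ha j => by rw [ha (j + -a)]; simp }
  obtain ⟨d, hd⟩ := Int.subgroup_cyclic G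
  have hG : ∀ r : ℤ, r ∈ G ↔ d ∣ r := fun r => by
    rw [hd, AddSubgroup.mem_closure_singleton]
    constructor
    · rintro ⟨n, rfl⟩
      exact ⟨n, by simp [mul_comm]⟩
    · rintro ⟨n, rfl⟩
      exact ⟨n, by simp [mul_comm]⟩
  have h1 : d.natAbs = 1 := T.Ret_gcd _ fun i hi => by
    rw [← Int.natCast_dvd_natCast, Int.natAbs_dvd, ← hG]
    exact h i hi
  have h2 : j ∈ G := (hG j).2 (Int.isUnit_iff_natAbs_eq.2 h1).dvd
  simpa using (h2 0).symm

section Constancy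

variable {η : Measure Δ₀} {H : ℤ → Δ₀ → ℝ}

lemma ae_relation_iterate (hFR : MeasurePreserving T.FR η η) {i : ℕ}
    (hrel : ∀ j, ∀ᵐ x ∂η, x ∈ T.Λ i → H j x = H (j + T.Ret i) (T.FR x)) (k : ℕ) :
    ∀ j, ∀ᵐ x ∂η, x ∈ T.cyl (List.replicate k i) →
      H j x = H (j + k * T.Ret i) (T.FR^[k] x) := by
  induction k with
  | zero => exact fun j => .of_forall fun x _ => by simp
  | succ k ih =>
    intro j
    filter_upwards [hrel j, hFR.quasiMeasurePreserving.ae (ih (j + T.Ret i))] with x h1 h2 hx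
    rw [List.replicate_succ] at hx
    rw [h1 hx.1, h2 hx.2, Function.iterate_succ_apply]
    congr 1
    push_cast
    ring

lemma ofReal_le_of_backward [IsFiniteMeasure η] (hη : T.Reg fun A => η A) (hη0 : η univ ≠ 0)
    (hFR : MeasurePreserving T.FR η η) (hm : ∀ j, Measurable (H j))
    (hi : ∀ j, Integrable (H j) η)
    (hreg : ∀ j, T.Reg fun A => ENNReal.ofReal (∫ x in A, H j x ∂η))
    (hrel : ∀ i ∈ T.I, ∀ j, ∀ᵐ x ∂η, x ∈ T.Λ i → H j x = H (j + T.Ret i) (T.FR x))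
    (j : ℤ) {a b : ℝ} (ha : η {x | H j x ≤ a} ≠ 0) (hb : η {x | b ≤ H j x} ≠ 0) :
    ENNReal.ofReal b ≤ ENNReal.ofReal a := by
  obtain ⟨i, hiI⟩ := T.exists_mem_I
  have hk : ∀ k, ENNReal.ofReal b ≤ T.regExp k ^ 2 * ENNReal.ofReal a := by
    intro k
    set w := List.replicate k i with hwdef
    have hlen : w.length = k := List.length_replicate
    have hw : T.Admissible w := fun n hn => by rwa [List.eq_of_mem_replicate hn]
    have hrel' := ae_relation_iterate hFR (hrel i hiI) k (j - k * T.Ret i)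
    rw [sub_add_cancel, ← hwdef] at hrel'
    have hpull : ∀ S : Set Δ₀, MeasurableSet S → η S ≠ 0 →
        MeasurableSet (T.cyl w ∩ T.FR^[k] ⁻¹' S) ∧ η (T.cyl w ∩ T.FR^[k] ⁻¹' S) ≠ 0 := by
      intro S hS h0
      refine ⟨(measurableSet_cyl hw).inter (T.FR_meas.iterate k hS), fun h => h0 ?_⟩
      refine hη.absolutelyContinuous ?_
      rw [← measure_cyl_inter_iterate_eq_zero_iff hw hS, hlen]
      exact hη.absolutelyContinuous' hη0 h
    obtain ⟨hmA, hA0⟩ := hpull _ (measurableSet_le (hm j) measurable_const) ha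
    obtain ⟨hmB, hB0⟩ := hpull _ (measurableSet_le measurable_const (hm j)) hb
    set A := T.cyl w ∩ T.FR^[k] ⁻¹' {x | H j x ≤ a}
    set B := T.cyl w ∩ T.FR^[k] ⁻¹' {x | b ≤ H j x}
    have hconst : ∀ (c : ℝ) (S : Set Δ₀),
        ENNReal.ofReal (∫ _ in S, c ∂η) = ENNReal.ofReal c * η S := fun c S => by
      rw [setIntegral_const, smul_eq_mul, mul_comm, ENNReal.ofReal_mul' measureReal_nonneg,
        ofReal_measureReal]
    have hIA : ENNReal.ofReal (∫ x in A, H (j - k * T.Ret i) x ∂η) ≤ ENNReal.ofReal a * η A := by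
      rw [← hconst]
      refine ENNReal.ofReal_le_ofReal (setIntegral_mono_on_ae (hi _).integrableOn
        (integrable_const _).integrableOn hmA ?_)
      filter_upwards [hrel'] with x hx hxA
      rw [hx hxA.1]
      exact hxA.2
    have hIB : ENNReal.ofReal b * η B ≤ ENNReal.ofReal (∫ x in B, H (j - k * T.Ret i) x ∂η) := by
      rw [← hconst]
      refine ENNReal.ofReal_le_ofReal (setIntegral_mono_on_ae
        (integrable_const _).integrableOn (hi _).integrableOn hmB ?_)
      filter_upwards [hrel'] with x hx hxB
      rw [hx hxB.1]
      exact hxB.2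
    have hcmp := (hreg (j - k * T.Ret i)).compare hη hw hmB hmA inter_subset_left
      inter_subset_left
    rw [hlen] at hcmp
    rw [← ENNReal.mul_le_mul_iff_left (mul_ne_zero hA0 hB0)
      (ENNReal.mul_ne_top (measure_ne_top _ _) (measure_ne_top _ _))]
    calc _ = ENNReal.ofReal b * η B * η A := by ring
      _ ≤ ENNReal.ofReal (∫ x in B, H (j - k * T.Ret i) x ∂η) * η A := mul_le_mul_left hIB _
      _ ≤ _ := hcmp
      _ ≤ T.regExp k ^ 2 * (ENNReal.ofReal a * η A * η B) := by gcongr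
      _ = _ := by ring
  refine ge_of_tendsto' (x := atTop) ?_ hk
  have := ENNReal.Tendsto.mul_const ((ENNReal.continuous_pow 2).tendsto 1 |>.comp
    T.tendsto_regExp) (.inr (ENNReal.ofReal_ne_top (r := a)))
  simpa [Function.comp_def] using this

/-- A bi-infinite sequence of regular densities on the base which is carried to itself by
composition with the return map is constant. -/
lemma ae_eq_const_of_backward [IsFiniteMeasure η] (hη : T.Reg fun A => η A)
    (hη0 : η univ ≠ 0) (hFR : MeasurePreserving T.FR η η) (hm : ∀ j, Measurable (H j))
    (hi : ∀ j, Integrable (H j) η) (hnn : ∀ j, 0 ≤ ∫ x, H j x ∂η)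
    (hreg : ∀ j, T.Reg fun A => ENNReal.ofReal (∫ x in A, H j x ∂η))
    (hrel : ∀ i ∈ T.I, ∀ j, ∀ᵐ x ∂η, x ∈ T.Λ i → H j x = H (j + T.Ret i) (T.FR x)) :
    ∃ c : ℝ, ∀ j, ∀ᵐ x ∂η, H j x = c := by
  have hne : η ≠ 0 := fun h => hη0 (by simp [h])
  have havg : ∀ j, 0 ≤ ⨍ x, H j x ∂η := fun j => by
    rw [average_eq]
    exact smul_nonneg (by positivity) (hnn j)
  have hle : ∀ j, ∀ᵐ x ∂η, H j x ≤ ⨍ y, H j y ∂η := by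
    intro j
    have h1 : ∀ n : ℕ, ∀ᵐ x ∂η, H j x < (⨍ y, H j y ∂η) + 1 / ((n : ℝ) + 1) := by
      intro n
      have hpos : (0 : ℝ) < 1 / ((n : ℝ) + 1) := by positivity
      by_contra hcon
      have hcon' : η {x | (⨍ y, H j y ∂η) + 1 / ((n : ℝ) + 1) ≤ H j x} ≠ 0 := fun h0 =>
        hcon (by rw [ae_iff]; simpa only [not_lt] using h0)
      have h2 := ofReal_le_of_backward hη hη0 hFR hm hi hreg hrel j
        (measure_le_average_pos hne (hi j)).ne' hcon'
      rw [ENNReal.ofReal_le_ofReal_iff (havg j)] at h2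
      linarith
    filter_upwards [ae_all_iff.2 h1] with x hx
    refine ge_of_tendsto' (x := atTop) ?_ fun n => (hx n).le
    simpa using tendsto_one_div_add_atTop_nhds_zero_nat.const_add (⨍ y, H j y ∂η)
  have heq : ∀ j, ∀ᵐ x ∂η, H j x = ⨍ y, H j y ∂η := fun j =>
    (integral_eq_iff_of_ae_le (hi j) (integrable_const _) (hle j)).1 (integral_average η (H j)).symm
  have hper : ∀ i ∈ T.I, ∀ j, ⨍ y, H j y ∂η = ⨍ y, H (j + T.Ret i) y ∂η := by
    intro i hiI j
    have hpos : η (T.Λ i) ≠ 0 := fun h =>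
      (T.Λ_pos i hiI).ne' (hη.absolutelyContinuous' hη0 h)
    obtain ⟨x, hx, h1, h2, h3⟩ := ((frequently_ae_mem_iff.2 hpos).and_eventually
      ((hrel i hiI j).and ((heq j).and (hFR.quasiMeasurePreserving.ae
        (heq (j + T.Ret i)))))).exists
    rw [← h2, h1 hx, h3]
  exact ⟨⨍ y, H 0 y ∂η, fun j => by rw [← T.exists_const_of_periods hper j]; exact heq j⟩

end Constancy

/-! ### Mixing -/

lemma slice_preimage_inter_cyl {i l n : ℕ} {w : List ℕ} (hi : i ∈ T.I) (hl : l < T.Ret i)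
    (A : Set Δ₀) : slice l (T.towerMap^[n] ⁻¹' T.levelSet 0 A) ∩ T.cyl (i :: w) =
      T.cyl (i :: w) ∩ T.hit (n + l) A := by
  rw [inter_comm]
  ext x
  refine and_congr_right fun hx => ?_
  have hlx : l < T.R x := by rwa [T.R_eq i hi x hx.1]
  rw [slice_eq, hit, mem_preimage, Function.iterate_add_apply, iterate_level_zero hlx]
  exact ⟨fun h => h.1, fun h => ⟨h, hlx⟩⟩

lemma ae_iterate_of_ae_comp {α : Type*} [MeasurableSpace α] {ν : Measure α} {F : α → α}
    (hF : MeasurePreserving F ν ν) {h : ℤ → α → ℝ} (hrel : ∀ j, h j =ᵐ[ν] h (j + 1) ∘ F)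
    (k : ℕ) : ∀ j, ∀ᵐ p ∂ν, h j p = h (j + k) (F^[k] p) := by
  induction k with
  | zero => exact fun j => .of_forall fun p => by simp
  | succ k ih =>
    intro j
    filter_upwards [hrel j, hF.quasiMeasurePreserving.ae (ih (j + 1))] with p h1 h2
    rw [h1, Function.comp_apply, h2, Function.iterate_succ_apply]
    congr 1
    push_cast
    ring

variable {η : Measure Δ₀}

/-- Mixing against the cylinders of the tower. -/
lemma tendsto_measure_preimage_inter_cyl [IsFiniteMeasure η] (hη : T.Reg fun A => η A)
    (hη0 : η univ ≠ 0) (hFR : MeasurePreserving T.FR η η) [IsProbabilityMeasure (T.lift η)] {i : ℕ} {w : List ℕ}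
    (hw : T.Admissible (i :: w)) (l : ℕ) {A : Set T.Tower} (hA : MeasurableSet A) :
    Tendsto (fun n => (T.lift η).real (T.towerMap^[n] ⁻¹' A ∩ T.levelSet l (T.cyl (i :: w))))
      atTop (𝓝 ((T.lift η).real A * (T.lift η).real (T.levelSet l (T.cyl (i :: w))))) := by
  have hiI := (admissible_cons.1 hw).1
  have hmw := measurableSet_cyl hw
  rcases le_or_gt (T.Ret i) l with hl | hl
  · have : T.levelSet l (T.cyl (i :: w)) = ∅ := by
      refine eq_empty_of_forall_notMem fun p ⟨hp, hp'⟩ => ?_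
      have h1 := p.2
      rw [T.R_eq i hiI _ hp'.1] at h1
      omega
    simp [this]
  have hB := measurableSet_levelSet (T := T) l hmw
  set B := T.levelSet l (T.cyl (i :: w)) with hBdef
  set ν := T.lift η with hν
  have hF : MeasurePreserving T.towerMap ν ν := measurePreserving_towerMap hFR
  rw [tendsto_iff_ultrafilter]
  intro 𝓤 h𝓤
  obtain ⟨h, hm, hint, hlim, hrel⟩ := exists_backward_densities hF hB 𝓤 h𝓤
  set H : ℤ → Δ₀ → ℝ := fun j x => h j (T.level 0 x) with hH
  have hHm : ∀ j, Measurable (H j) := fun j => (hm j).comp (measurable_level 0)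
  have hmap : (T.lift η).restrict (T.levelSet 0 univ) = η.map (T.level 0) := by
    refine Measure.ext fun S hS => ?_
    rw [Measure.restrict_apply hS, lift_inter_levelSet η hS 0 .univ,
      Measure.map_apply (measurable_level 0) hS, slice_zero, inter_univ]
  have hHi : ∀ j, Integrable (H j) η := fun j => by
    have h1 := (hint j).integrableOn (s := T.levelSet 0 univ)
    rw [IntegrableOn, hν, hmap] at h1
    exact h1.comp_measurable (measurable_level 0)
  have hHlim : ∀ j S, MeasurableSet S →
      Tendsto (fun n : ℕ => η.real (T.cyl (i :: w) ∩ T.hit (((n : ℤ) + j).toNat + l) S)) 𝓤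
        (𝓝 (∫ x in S, H j x ∂η)) := fun j S hS => by
    have h1 := hlim j (T.levelSet 0 S) (measurableSet_levelSet 0 hS)
    rw [hν, setIntegral_levelSet_zero η (hm j) hS] at h1
    refine h1.congr fun n => ?_
    rw [measureReal_def, measureReal_def, hBdef, lift_inter_levelSet η
      (T.measurable_towerMap.iterate _ (measurableSet_levelSet 0 hS)) l hmw,
      slice_preimage_inter_cyl hiI hl]
  have hHreg : ∀ j, T.Reg fun S => ENNReal.ofReal (∫ x in S, H j x ∂η) := fun j => by
    obtain ⟨N, hN⟩ := Reg.cyl_inter_hit hw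
    refine Reg.of_tendsto (l := (𝓤 : Filter ℕ))
      (φ := fun n S => η (T.cyl (i :: w) ∩ T.hit (((n : ℤ) + j).toNat + l) S)) (h𝓤 ?_)
      fun S hS => ?_
    · filter_upwards [eventually_ge_atTop (N + j.natAbs)] with n hn
      exact hN _ (by omega) hη
    · exact (ENNReal.tendsto_ofReal (hHlim j S hS)).congr fun n => ofReal_measureReal
  have hHnn : ∀ j, 0 ≤ ∫ x, H j x ∂η := fun j => by
    have := hHlim j univ .univ
    rw [Measure.restrict_univ] at this
    exact ge_of_tendsto' this fun n => measureReal_nonneg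
  have hiter := ae_iterate_of_ae_comp hF hrel
  have hbase : ∀ j (k : ℕ), ∀ᵐ x ∂η, H j x = h (j + k) (T.towerMap^[k] (T.level 0 x)) := by
    intro j k
    have h1 := (ae_lift_iff (measurableSet_eq_fun (hm j)
      ((hm (j + k)).comp (T.measurable_towerMap.iterate k)))).1 (hiter k j) 0
    filter_upwards [h1] with x hx
    exact hx (T.R_pos x)
  obtain ⟨c, hc⟩ := ae_eq_const_of_backward hη hη0 hFR hHm hHi hHnn hHreg fun i hi j => by
    filter_upwards [hbase j (T.Ret i)] with x hx hxi
    rw [hx, iterate_return (T.R_eq i hi x hxi).symm]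
  have hconst : ∀ᵐ p ∂ν, h 0 p = c := by
    rw [hν, ae_lift_iff (measurableSet_eq_fun (hm 0) measurable_const)]
    intro k
    filter_upwards [hbase (-k) k, hc (-k)] with x hx hx' hk
    rw [hx, neg_add_cancel, iterate_level_zero hk] at hx'
    exact hx'
  have hset : ∀ S, MeasurableSet S → ∫ p in S, h 0 p ∂ν = ν.real S * c := fun S hS => by
    rw [setIntegral_congr_ae hS (hconst.mono fun p hp _ => hp), setIntegral_const, smul_eq_mul]
  have hcB : c = ν.real B := by
    have h1 := hlim 0 univ .univ
    rw [hset _ .univ, probReal_univ, one_mul] at h1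
    simp only [preimage_univ, univ_inter] at h1
    exact tendsto_nhds_unique h1 tendsto_const_nhds
  have h1 := hlim 0 A hA
  rw [hset A hA, hcB] at h1
  simpa using h1

/-! ### Approximation by cylinders -/

variable (T) in
/-- The cylinders of the tower. -/
def towerCylinders : Set (Set T.Tower) :=
  {B | ∃ l i w, T.Admissible (i :: w) ∧ B = T.levelSet l (T.cyl (i :: w))}

lemma isPiSystem_towerCylinders : IsPiSystem T.towerCylinders := by
  rintro _ ⟨l, i, v, hv, rfl⟩ _ ⟨l', i', w, hw, rfl⟩ ⟨p, ⟨rfl, hpv⟩, ⟨rfl, hpw⟩⟩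
  rcases le_total (i :: v).length (i' :: w).length with h | h
  · refine ⟨_, i', w, hw, inter_eq_right.2 ?_⟩
    exact fun q hq => ⟨hq.1, cyl_subset_cyl hw hv h hpw hpv hq.2⟩
  · refine ⟨_, i, v, hv, inter_eq_left.2 ?_⟩
    exact fun q hq => ⟨hq.1, cyl_subset_cyl hv hw h hpv hpw hq.2⟩

lemma generateFrom_towerCylinders_le (T : YoungTower Δ₀) :
    MeasurableSpace.generateFrom T.towerCylinders ≤
      (inferInstance : MeasurableSpace T.Tower) := by
  refine MeasurableSpace.generateFrom_le ?_
  rintro _ ⟨l, i, w, hw, rfl⟩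
  exact measurableSet_levelSet l (measurableSet_cyl hw)

variable (T) in
/-- The completion of the σ-algebra generated by the cylinders of the tower. -/
abbrev towerCylinderSigma (ν : Measure T.Tower) : MeasurableSpace T.Tower :=
  eventuallyMeasurableSpace (MeasurableSpace.generateFrom T.towerCylinders) (ae ν)

lemma levelSet_iUnion {ι : Type*} (l : ℕ) (f : ι → Set Δ₀) :
    T.levelSet l (⋃ n, f n) = ⋃ n, T.levelSet l (f n) := by
  ext p
  simp [levelSet]

lemma levelSet_mem_of_union_cyl {ν : Measure T.Tower} (hν : ν = T.lift η) (hη : η ≪ T.m₀)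
    {n : ℕ} {C : Set Δ₀} (hC : ∀ w, T.Admissible w → w.length = n + 1 →
      ∀ x ∈ T.cyl w, x ∈ C → T.cyl w ⊆ C) (l : ℕ) :
    MeasurableSet[T.towerCylinderSigma ν] (T.levelSet l C) := by
  have h1 : MeasurableSet[MeasurableSpace.generateFrom T.towerCylinders]
      (⋃ w : {w // T.Admissible w ∧ w.length = n + 1 ∧ T.cyl w ⊆ C}, T.levelSet l (T.cyl w)) := by
    refine MeasurableSet.iUnion (m := MeasurableSpace.generateFrom T.towerCylinders) ?_
    rintro ⟨w, hw, hn, -⟩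
    cases w with
    | nil => simp at hn
    | cons i w => exact MeasurableSpace.measurableSet_generateFrom ⟨l, i, w, hw, rfl⟩
  refine ⟨_, h1, ?_⟩
  have h2 : ∀ᵐ p ∂ν, ∃ w, T.Admissible w ∧ w.length = n + 1 ∧ p.1.1 ∈ T.cyl w := by
    rw [hν]
    exact ae_lift_of_ae (P := fun x => ∃ w, T.Admissible w ∧ w.length = n + 1 ∧ x ∈ T.cyl w)
      (hη.ae_le (T.ae_mem_cyl (n + 1)))
  filter_upwards [h2] with p hp
  obtain ⟨w, hw, hn, hpw⟩ := hp
  refine propext ⟨fun hpC => ?_, fun hpC => ?_⟩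
  · exact mem_iUnion.2 ⟨⟨w, hw, hn, hC w hw hn _ hpw hpC.2⟩, hpC.1, hpw⟩
  · obtain ⟨v, hpv⟩ := mem_iUnion.1 hpC
    exact ⟨hpv.1, v.2.2.2 hpv.2⟩

lemma levelSet_mem_of_cylinderSigma {ν : Measure T.Tower} (hν : ν = T.lift η) (hη : η ≪ T.m₀)
    {C : Set Δ₀} (hC : MeasurableSet[cylinderSigma T.I T.Λ T.FR] C) (l : ℕ) :
    MeasurableSet[T.towerCylinderSigma ν] (T.levelSet l C) := by
  induction C, hC using MeasurableSpace.generateFrom_induction with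
  | hC C hC _ =>
    obtain ⟨n, i, hi, rfl⟩ := hC
    refine levelSet_mem_of_union_cyl hν hη (n := n) (fun w hw hn x hx hxC y hy => ?_) l
    obtain ⟨k, hk, hxk, hyk⟩ := le_sep_iff.1
      ((le_sep_iff_exists_cyl (T := T)).2 ⟨w, hw, hn, hx, hy⟩) n (by omega)
    obtain rfl := eq_of_mem_Λ hi hk hxC hxk
    exact hyk
  | empty =>
    have : T.levelSet l ∅ = ∅ := eq_empty_of_forall_notMem fun p hp => hp.2
    rw [this]
    exact @MeasurableSet.empty _ (T.towerCylinderSigma ν)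
  | compl C _ ih =>
    have h1 := levelSet_mem_of_union_cyl hν hη (n := 0) (C := univ)
      (fun w _ _ x _ _ => subset_univ _) l
    have : T.levelSet l Cᶜ = T.levelSet l univ \ T.levelSet l C := by
      ext p
      simp only [levelSet, Set.mem_sdiff, mem_ofPred_eq, mem_compl_iff, mem_univ]
      tauto
    rw [this]
    exact MeasurableSet.diff h1 ih
  | iUnion f _ ih =>
    rw [levelSet_iUnion]
    exact MeasurableSet.iUnion (m := T.towerCylinderSigma ν) ih

lemma exists_ae_eq_generateFrom_towerCylinders (hη : η ≪ T.m₀) {B : Set T.Tower}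
    (hB : MeasurableSet B) :
    ∃ B', MeasurableSet[MeasurableSpace.generateFrom T.towerCylinders] B' ∧
      B =ᵐ[T.lift η] B' := by
  have h : MeasurableSet[T.towerCylinderSigma (T.lift η)]
      (⋃ l, T.levelSet l (slice l B)) := by
    refine MeasurableSet.iUnion (m := T.towerCylinderSigma (T.lift η)) fun l => ?_
    obtain ⟨C, hC, hBC⟩ := T.generating _ (measurableSet_slice l hB)
    obtain ⟨D, hD, hCD⟩ := levelSet_mem_of_cylinderSigma rfl hη hC l
    refine ⟨D, hD, EventuallyEq.trans ?_ hCD⟩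
    have h2 : ∀ᵐ p ∂T.lift η, p.1.1 ∈ slice l B ↔ p.1.1 ∈ C :=
      ae_lift_of_ae (hη.ae_le hBC.mem_iff)
    filter_upwards [h2] with p hp
    exact propext (and_congr_right fun _ => hp)
  have hBeq : ⋃ l, T.levelSet l (slice l B) = B := by
    ext p
    simp only [mem_iUnion]
    constructor
    · rintro ⟨_, rfl, _, hp⟩
      exact hp
    · exact fun hp => ⟨p.1.2, rfl, p.2, hp⟩
  rwa [hBeq] at h

/-! ### The main theorem -/

lemma mixing_lift [IsFiniteMeasure η] (hη : T.Reg fun A => η A) (hη0 : η univ ≠ 0)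
    (hFR : MeasurePreserving T.FR η η) [IsProbabilityMeasure (T.lift η)] :
    T.Mixing (T.lift η) := by
  set ν := T.lift η with hν
  have hF : MeasurePreserving T.towerMap ν ν := measurePreserving_towerMap hFR
  have key : ∀ B, MeasurableSet[MeasurableSpace.generateFrom T.towerCylinders] B →
      ∀ A, MeasurableSet A →
        Tendsto (fun n => ν.real (T.towerMap^[n] ⁻¹' A ∩ B)) atTop (𝓝 (ν.real A * ν.real B)) := by
    intro B hB
    induction B, hB using MeasurableSpace.induction_on_inter rfl isPiSystem_towerCylinders with
    | empty => simp
    | basic B hB =>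
      obtain ⟨l, i, w, hw, rfl⟩ := hB
      exact fun A hA => tendsto_measure_preimage_inter_cyl hη hη0 hFR hw l hA
    | compl B hB ih =>
      intro A hA
      have hB' := T.generateFrom_towerCylinders_le B hB
      have h1 : ∀ n, ν.real (T.towerMap^[n] ⁻¹' A ∩ Bᶜ) =
          ν.real A - ν.real (T.towerMap^[n] ⁻¹' A ∩ B) := fun n => by
        rw [← (hF.iterate n).measureReal_preimage hA.nullMeasurableSet,
          ← measureReal_inter_add_sdiff (s := T.towerMap^[n] ⁻¹' A) hB', sdiff_eq]
        ring_nf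
      simp only [h1]
      rw [measureReal_compl hB', probReal_univ, mul_sub, mul_one]
      exact (ih A hA).const_sub _
    | iUnion f hd hf ih =>
      intro A hA
      have hf' := fun k => T.generateFrom_towerCylinders_le (f k) (hf k)
      have hreal : ∀ g : ℕ → Set T.Tower, (∀ k, MeasurableSet (g k)) →
          Pairwise (Function.onFun Disjoint g) →
          ν.real (⋃ k, g k) = ∑' k, ν.real (g k) := fun g hg hgd => by
        rw [measureReal_def, measure_iUnion hgd hg,
          ENNReal.tsum_toReal_eq fun k => measure_ne_top _ _]
        rfl
      have h1 : ∀ n, ν.real (T.towerMap^[n] ⁻¹' A ∩ ⋃ k, f k) =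
          ∑' k, ν.real (T.towerMap^[n] ⁻¹' A ∩ f k) := fun n => by
        rw [inter_iUnion]
        exact hreal _ (fun k => (T.measurable_towerMap.iterate n hA).inter (hf' k))
          fun a b hab => (hd hab).mono inter_subset_right inter_subset_right
      simp only [h1]
      rw [hreal f hf' hd, ← tsum_mul_left]
      have hsum : ∑' k, ν (f k) ≠ ⊤ := by
        rw [← measure_iUnion hd hf']
        exact measure_ne_top _ _
      refine tendsto_tsum_of_dominated_convergence (ENNReal.summable_toReal hsum)
        (fun k => ih k A hA) (.of_forall fun n k => ?_)
      rw [Real.norm_of_nonneg measureReal_nonneg]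
      exact measureReal_mono inter_subset_right
  intro A B hA hB
  obtain ⟨B', hB', hBB'⟩ := exists_ae_eq_generateFrom_towerCylinders hη.absolutelyContinuous hB
  rw [measure_congr hBB']
  have h1 := ENNReal.tendsto_ofReal (key B' hB' A hA)
  rw [ENNReal.ofReal_mul measureReal_nonneg, ofReal_measureReal, ofReal_measureReal] at h1
  refine h1.congr fun n => ?_
  rw [ofReal_measureReal]
  exact (measure_congr ((ae_eq_refl _).inter hBB')).symm

lemma Mixing.ergodic {ν : Measure T.Tower} [IsProbabilityMeasure ν] (h : T.Mixing ν)
    (hF : MeasurePreserving T.towerMap ν ν) : Ergodic T.towerMap ν := by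
  refine ⟨hF, ⟨fun {A} hA hinv => ?_⟩⟩
  have hn : ∀ n, T.towerMap^[n] ⁻¹' A = A := fun n => by
    induction n with
    | zero => rfl
    | succ n ih => rw [Function.iterate_succ, preimage_comp, ih, hinv]
  have h1 := h A A hA hA
  simp only [hn, inter_self] at h1
  have h2 : ν A = ν A * ν A := tendsto_nhds_unique tendsto_const_nhds h1
  rw [eventuallyConst_set']
  rcases eq_or_ne (ν A) 0 with h0 | h0
  · exact .inl (ae_eq_empty.2 h0)
  · refine .inr ?_
    rw [ae_eq_univ, prob_compl_eq_zero_iff hA]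
    have h3 : ν A * 1 = ν A * ν A := by rw [mul_one]; exact h2
    exact ((ENNReal.mul_right_inj h0 (measure_ne_top _ _)).1 h3).symm

end YoungTower

end

/-- If the return time `R` of a Young tower is integrable with respect to `m₀`, then the tower
map `F` has a unique invariant probability measure `ν` equivalent to the reference measure `m`;
its density `dν/dm` (has a version that) belongs to `F_β⁺` and is bounded below by a positive
constant; and `(F, ν)` is mixing. -/
theorem young_tower_invariant_measure {Δ₀ : Type*} [MeasurableSpace Δ₀] (T : YoungTower Δ₀)
    (hR : Integrable (fun x => (T.R x : ℝ)) T.m₀) :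
    ∃ ν : Measure T.Tower,
      (IsProbabilityMeasure ν ∧ MeasurePreserving T.towerMap ν ν ∧
        ν ≪ T.towerMeasure ∧ T.towerMeasure ≪ ν) ∧
      (∀ ν' : Measure T.Tower, IsProbabilityMeasure ν' → MeasurePreserving T.towerMap ν' ν' →
        ν' ≪ T.towerMeasure → T.towerMeasure ≪ ν' → ν' = ν) ∧
      (∃ ρ : T.Tower → ℝ, Measurable ρ ∧
        ν = T.towerMeasure.withDensity (fun p => ENNReal.ofReal (ρ p)) ∧
        T.memFplus ρ ∧
        ∃ c : ℝ, 0 < c ∧ ∀ p, c ≤ ρ p) ∧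
      T.Mixing ν := by
  obtain ⟨η, hfin, hη0, hη, hFR, hone⟩ := YoungTower.exists_normalized_base hR
  have hprob : IsProbabilityMeasure (T.lift η) := ⟨hone⟩
  have hF := YoungTower.measurePreserving_towerMap hFR
  have hac : T.towerMeasure ≪ T.lift η := by
    rw [T.towerMeasure_eq_lift]
    exact YoungTower.lift_absolutelyContinuous (hη.absolutelyContinuous' hη0)
  have hac' : T.lift η ≪ T.towerMeasure := by
    rw [T.towerMeasure_eq_lift]
    exact YoungTower.lift_absolutelyContinuous hη.absolutelyContinuous
  have hmix := YoungTower.mixing_lift hη hη0 hFR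
  refine ⟨T.lift η, ⟨hprob, hF, hac', hac⟩, fun ν' _ hF' h' _ => ?_,
    hη.exists_density_lift hη0, hmix⟩
  exact (hmix.ergodic hF).eq_of_absolutelyContinuous hF' (h'.trans hac)
end

section
/- Let $d\ge 0$, and let $N$ and $P$ be manifolds (Hausdorff, second countable, without boundary, not necessarily compact or connected) of the same dimension $d$, the topology of $P$ being induced by a metric (which may take the value $\infty$, e.g. the Riemannian distance). Let $\mu_N$ be a locally finite Borel measure on $N$ and $\mu_P$ a finite Borel measure on $P$ (for example, the Riemannian volumes, where $P$ has finite volume). Call a map $\Theta:N\to P$ absolutely continuous with Jacobian $J:N\to\mathbb R$ if $\Theta$ is continuous and injective, $J$ is $\mu_N$-integrable, and $\mu_P(\Theta(A))=\int_A J\,d\mu_N$ for every Borel set $A\subseteq N$. For each $n\in\mathbb N$ let $\Theta_n:N\to P$ be absolutely continuous with Jacobian $J_n$. Assume that $(\Theta_n)$ converges uniformly to an injective continuous map $\Theta:N\to P$, and that $(J_n)$ converges uniformly to an integrable continuous function $J:N\to\mathbb R$. Then $\Theta$ is absolutely continuous with Jacobian $J$; that is, $\mu_P(\Theta(A))=\int_A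 J\,d\mu_N$ for every Borel set $A\subseteq N$. -/
open MeasureTheory Filter

/-- `Θ : N → P` is absolutely continuous with Jacobian `J` (for the measures `μN`, `μP`):
`Θ` is an injective continuous map, `J` is integrable, and `μP (Θ(A)) = ∫_A J dμN` for every
Borel set `A`. The identity is one of real numbers; finiteness of its left side is part of it, so
that the conversion of `μP (Θ(A))` to a real number never takes a default value. -/
structure IsAbsolutelyContinuousWithJacobian {N P : Type*}
    [TopologicalSpace N] [MeasurableSpace N] [TopologicalSpace P] [MeasurableSpace P]
    (μN : Measure N) (μP : Measure P) (Θ : N → P) (J : N → ℝ) : Prop where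
  continuous : Continuous Θ
  injective : Function.Injective Θ
  integrable : Integrable J μN
  measure_image : ∀ A : Set N, MeasurableSet A →
    μP (Θ '' A) < ⊤ ∧ (μP (Θ '' A)).toReal = ∫ x in A, J x ∂μN

open Metric Set Topology

section Brouwer

variable {E : Type*} [NormedAddCommGroup E] [InnerProductSpace ℝ E]

/-- The determinant of `1 + t • A` is a polynomial in `t` of degree at most the dimension, so its
value at `t = 1` is a fixed affine combination of its values at small positive `t`. -/
theorem exists_weights_det_one_add [FiniteDimensional ℝ E] {t₀ : ℝ} (ht₀ : 0 < t₀) :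
    ∃ (s : Finset ℝ) (w : ℝ → ℝ), (∀ t ∈ s, 0 < t ∧ t < t₀) ∧ ∑ t ∈ s, w t = 1 ∧
      ∀ A : E →L[ℝ] E, (1 + A).det = ∑ t ∈ s, w t * (1 + t • A).det := by
  obtain ⟨s, hs, hcard⟩ :=
    (Ioo_infinite ht₀).exists_subset_card_eq (Module.finrank ℝ E + 1)
  have hne : s.Nonempty := by
    rw [← Finset.card_pos]
    omega
  refine ⟨s, fun t => (Lagrange.basis s id t).eval 1, fun t ht => hs ht, ?_, fun A => ?_⟩
  · rw [← Polynomial.eval_finsetSum, Lagrange.sum_basis (Set.injOn_id _) hne,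
      Polynomial.eval_one]
  · let b := Module.finBasis ℝ E
    let M := LinearMap.toMatrix b b (A : E →ₗ[ℝ] E)
    let p : Polynomial ℝ :=
      Matrix.det ((Polynomial.X : Polynomial ℝ) • M.map Polynomial.C
        + (1 : Matrix _ _ ℝ).map Polynomial.C)
    have hp : ∀ t, p.eval t = (1 + t • A).det := by
      intro t
      have : (1 + t • A).det = (1 + t • M).det := by
        rw [ContinuousLinearMap.det, ← LinearMap.det_toMatrix b]
        congr 1
        simp [M, LinearMap.toMatrix_one]
      rw [this, add_comm, ← Polynomial.coe_evalRingHom, RingHom.map_det]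
      congr 1
      ext i j
      by_cases hij : i = j <;> simp [hij, mul_comm t]
    have hdeg : p.degree < s.card := by
      refine lt_of_le_of_lt Polynomial.degree_le_natDegree ?_
      have := Polynomial.natDegree_det_X_add_C_le M 1
      rw [Fintype.card_fin] at this
      rw [hcard]
      exact_mod_cast Nat.lt_succ_of_le this
    have h := Lagrange.eq_interpolate_of_eval_eq (s := s) (v := id)
      (fun t => (1 + t • A).det) (Set.injOn_id _) hdeg (fun t _ => hp t)
    have h1 := congrArg (Polynomial.eval 1) h
    rw [hp, one_smul, Lagrange.interpolate_apply, Polynomial.eval_finsetSum] at h1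
    rw [h1]
    refine Finset.sum_congr rfl fun t _ => ?_
    rw [Polynomial.eval_mul, Polynomial.eval_C, mul_comm]

/-- A Lipschitz map on the closed unit ball that vanishes on the sphere extends by zero to a
Lipschitz map. -/
theorem lipschitzWith_indicator_closedBall {F : Type*} [NormedAddCommGroup F] {g : E → F}
    {K : NNReal} (hg : LipschitzOnWith K g (closedBall 0 1)) (h0 : ∀ x ∈ sphere (0 : E) 1, g x = 0) :
    LipschitzWith K ((closedBall 0 1).indicator g) := by
  have key : ∀ x ∈ closedBall (0 : E) 1, ∀ y ∉ closedBall (0 : E) 1, ‖g x‖ ≤ K * dist x y := by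
    intro x hx y hy
    rw [mem_closedBall_zero_iff] at hx hy
    have hc : ContinuousOn (fun s : ℝ => ‖AffineMap.lineMap x y s‖) (Icc 0 1) := by
      fun_prop
    obtain ⟨s, hs, hsn⟩ := intermediate_value_Icc zero_le_one hc
      (show (1 : ℝ) ∈ Icc _ _ by simp [hx, (not_le.1 hy).le])
    have hz : AffineMap.lineMap x y s ∈ sphere (0 : E) 1 := by simpa using hsn
    have h1 := hg.dist_le_mul x (by simpa using hx) _ (sphere_subset_closedBall hz)
    rw [h0 _ hz, dist_zero_right, dist_left_lineMap, Real.norm_of_nonneg hs.1] at h1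
    refine h1.trans (mul_le_mul_of_nonneg_left ?_ K.2)
    exact mul_le_of_le_one_left dist_nonneg hs.2
  refine LipschitzWith.of_dist_le_mul fun x y => ?_
  by_cases hx : x ∈ closedBall (0 : E) 1 <;> by_cases hy : y ∈ closedBall (0 : E) 1
  · simpa [indicator_of_mem hx, indicator_of_mem hy] using hg.dist_le_mul x hx y hy
  · simpa [indicator_of_mem hx, indicator_of_notMem hy] using key x hx y hy
  · rw [dist_comm x y]
    simpa [indicator_of_notMem hx, indicator_of_mem hy] using key y hy x hx
  · rw [indicator_of_notMem hx, indicator_of_notMem hy, dist_self]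
    positivity

/-- The homotopy from the identity to a retraction onto the sphere, at small times, permutes the
open unit ball. -/
theorem bijOn_ball_of_retraction [CompleteSpace E] {r : E → E} {K : NNReal}
    (hr : LipschitzOnWith K (fun x => r x - x) (closedBall 0 1))
    (h1 : ∀ x ∈ closedBall (0 : E) 1, ‖r x‖ = 1) (h2 : ∀ x ∈ sphere (0 : E) 1, r x = x)
    {t : ℝ} (ht0 : 0 ≤ t) (ht1 : t < 1) (htK : t * K < 1) :
    BijOn (fun x => x + t • (r x - x)) (ball 0 1) (ball 0 1) := by
  refine ⟨fun x hx => ?_, fun x hx y hy hxy => ?_, fun y hy => ?_⟩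
  · have hx' := ball_subset_closedBall hx
    rw [mem_ball_zero_iff] at hx ⊢
    have : x + t • (r x - x) = (1 - t) • x + t • r x := by module
    simp only [this]
    calc _ ≤ ‖(1 - t) • x‖ + ‖t • r x‖ := norm_add_le _ _
      _ = (1 - t) * ‖x‖ + t := by
        rw [norm_smul, norm_smul, h1 x hx', Real.norm_of_nonneg ht0,
          Real.norm_of_nonneg (by linarith), mul_one]
      _ < 1 := by nlinarith
  · by_contra hne
    have h := hr.dist_le_mul x (ball_subset_closedBall hx) y (ball_subset_closedBall hy)
    have hpos : 0 < dist x y := dist_pos.2 hne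
    have : dist x y = t * dist (r x - x) (r y - y) := by
      have h' : y - x = t • (r x - x) - t • (r y - y) := by
        simp only at hxy
        rw [sub_eq_sub_iff_add_eq_add, add_comm y, add_comm _ x, hxy, add_comm]
      rw [dist_comm, dist_eq_norm, dist_eq_norm, h', ← smul_sub, norm_smul,
        Real.norm_of_nonneg ht0]
    nlinarith [mul_le_mul_of_nonneg_left h ht0]
  · have hL := lipschitzWith_indicator_closedBall hr (fun x hx => by simp [h2 x hx])
    set g := (closedBall (0 : E) 1).indicator (fun x => r x - x) with hg
    lift t to NNReal using ht0
    have hcon : ContractingWith (t * K) (fun x => y - (t : ℝ) • g x) := by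
      refine ⟨by exact_mod_cast htK, LipschitzWith.of_dist_le_mul fun u v => ?_⟩
      rw [dist_sub_left, dist_smul₀, NNReal.coe_mul, mul_assoc, Real.norm_of_nonneg t.coe_nonneg]
      exact mul_le_mul_of_nonneg_left (hL.dist_le_mul u v) t.2
    have hfix := hcon.fixedPoint_isFixedPt
    set x := hcon.fixedPoint
    have hxy : y = x + (t : ℝ) • g x := by
      rw [eq_comm, ← eq_sub_iff_add_eq]
      exact hfix.symm
    by_cases hxb : x ∈ ball (0 : E) 1
    · refine ⟨x, hxb, ?_⟩
      rw [hxy, hg, indicator_of_mem (ball_subset_closedBall hxb)]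
    · exfalso
      have hgx : g x = 0 := by
        by_cases hxc : x ∈ closedBall (0 : E) 1
        · rw [hg, indicator_of_mem hxc]
          have : x ∈ sphere (0 : E) 1 := by
            rw [← closedBall_sdiff_ball]
            exact ⟨hxc, hxb⟩
          simp [h2 x this]
        · rw [hg, indicator_of_notMem hxc]
      rw [hgx, smul_zero, add_zero] at hxy
      exact hxb (hxy ▸ hy)

/-- A map into the unit sphere has everywhere singular derivative. -/
theorem det_fderiv_eq_zero_of_norm_eq_one [FiniteDimensional ℝ E] {r : E → E} {x : E}
    (hr : DifferentiableAt ℝ r x)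
    (h1 : ∀ᶠ y in 𝓝 x, ‖r y‖ = 1) : (fderiv ℝ r x).det = 0 := by
  by_contra hdet
  have hsurj : Function.Surjective (fderiv ℝ r x) := by
    have := (LinearMap.isUnit_iff_isUnit_det (fderiv ℝ r x : E →ₗ[ℝ] E)).2
      (isUnit_iff_ne_zero.2 hdet)
    exact ((Module.End.isUnit_iff _).1 this).2
  obtain ⟨v, hv⟩ := hsurj (r x)
  have h2 : HasFDerivAt (fun y => ‖r y‖ ^ 2) _ x := hr.hasFDerivAt.norm_sq
  have h3 : HasFDerivAt (fun y => ‖r y‖ ^ 2) (0 : E →L[ℝ] ℝ) x :=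
    (hasFDerivAt_const (1 : ℝ) x).congr_of_eventuallyEq (h1.mono fun y hy => by simp [hy])
  have h4 := congrArg (fun L => L v) (h2.unique h3)
  simp [hv, h1.self_of_nhds] at h4

/-- There is no `C¹` retraction of the closed unit ball onto the sphere. -/
theorem false_of_contDiffAt_retraction [FiniteDimensional ℝ E] {r : E → E}
    (hr : ∀ x ∈ closedBall (0 : E) 1, ContDiffAt ℝ 1 r x)
    (h1 : ∀ x ∈ closedBall (0 : E) 1, ‖r x‖ = 1) (h2 : ∀ x ∈ sphere (0 : E) 1, r x = x) :
    False := by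
  let _ : MeasurableSpace E := borel E
  have : BorelSpace E := ⟨rfl⟩
  let μ : Measure E := Measure.addHaar
  let g : E → E := fun x => r x - x
  have hg : ∀ x ∈ closedBall (0 : E) 1, ContDiffAt ℝ 1 g x := fun x hx =>
    (hr x hx).sub contDiffAt_id
  let A : E → E →L[ℝ] E := fderiv ℝ g
  have hA : ContinuousOn A (closedBall 0 1) := fun x hx =>
    ((hg x hx).fderiv_right (m := 0) (by simp)).continuousAt.continuousWithinAt
  have hgA : ∀ x ∈ closedBall (0 : E) 1, HasFDerivAt g (A x) x := fun x hx =>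
    ((hg x hx).differentiableAt (by simp)).hasFDerivAt
  obtain ⟨C, hC⟩ := (isCompact_closedBall (0 : E) 1).exists_bound_of_continuousOn hA
  set K : NNReal := C.toNNReal
  have hK : ∀ x ∈ closedBall (0 : E) 1, ‖A x‖ ≤ K := fun x hx =>
    (hC x hx).trans (Real.le_coe_toNNReal C)
  have hLip : LipschitzOnWith K g (closedBall 0 1) :=
    (convex_closedBall _ _).lipschitzOnWith_of_nnnorm_fderiv_le
      (fun x hx => (hgA x hx).differentiableAt) (fun x hx => hK x hx)
  obtain ⟨η, hη, hdet⟩ : ∃ η > 0, ∀ L : E →L[ℝ] E, ‖L‖ < η → 0 < (1 + L).det := by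
    have hc : ContinuousAt (fun L : E →L[ℝ] E => (1 + L).det) 0 :=
      (ContinuousLinearMap.continuous_det.comp (continuous_const.add continuous_id)).continuousAt
    have : ∀ᶠ L in 𝓝 (0 : E →L[ℝ] E), 0 < (1 + L).det := by
      refine hc.eventually_const_lt ?_
      simp [ContinuousLinearMap.det]
    obtain ⟨η, hη, h⟩ := Metric.eventually_nhds_iff.1 this
    exact ⟨η, hη, fun L hL => h (by simpa using hL)⟩
  obtain ⟨t₀, ht₀, htK, htη, ht1⟩ : ∃ t₀ : ℝ, 0 < t₀ ∧ t₀ * K < 1 ∧ t₀ * K < η ∧ t₀ < 1 := by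
    have : Tendsto (fun t : ℝ => t * K) (𝓝[>] 0) (𝓝 0) := by
      have : Tendsto (fun t : ℝ => t * K) (𝓝 0) (𝓝 (0 * K)) := tendsto_id.mul_const _
      rw [zero_mul] at this
      exact this.mono_left nhdsWithin_le_nhds
    obtain ⟨t, h⟩ := (((this.eventually_lt_const one_pos).and (this.eventually_lt_const hη)).and
      ((Ioo_mem_nhdsGT (zero_lt_one' ℝ)))).exists
    exact ⟨t, h.2.1, h.1.1, h.1.2, h.2.2⟩
  obtain ⟨s, w, hs, hw, hdetw⟩ := exists_weights_det_one_add (E := E) ht₀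
  have hint : ∀ t : ℝ, IntegrableOn (fun x => (1 + t • A x).det) (ball 0 1) μ := fun t =>
    ((ContinuousLinearMap.continuous_det.comp_continuousOn
      (continuousOn_const.add (hA.const_smul t))).integrableOn_compact
        (isCompact_closedBall _ _)).mono_set ball_subset_closedBall
  have hvol : ∀ t ∈ s, ∫ x in ball 0 1, (1 + t • A x).det ∂μ = μ.real (ball 0 1) := by
    intro t ht
    obtain ⟨hta, htb⟩ := hs t ht
    have hbij := bijOn_ball_of_retraction hLip h1 h2 hta.le (htb.trans ht1)
      (lt_of_le_of_lt (mul_le_mul_of_nonneg_right htb.le K.2) htK)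
    have hder : ∀ x ∈ ball (0 : E) 1,
        HasFDerivWithinAt (fun x => x + t • (r x - x)) (1 + t • A x) (ball 0 1) x := fun x hx =>
      ((hasFDerivAt_id x).add
        ((hgA x (ball_subset_closedBall hx)).const_smul t)).hasFDerivWithinAt
    have hcv := integral_image_eq_integral_abs_det_fderiv_smul μ measurableSet_ball hder
      hbij.injOn (fun _ => (1 : ℝ))
    rw [hbij.image_eq, setIntegral_const, smul_eq_mul, mul_one] at hcv
    rw [hcv]
    refine setIntegral_congr_fun measurableSet_ball fun x hx => ?_
    have : 0 < (1 + t • A x).det := by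
      refine hdet _ ?_
      rw [norm_smul, Real.norm_of_nonneg hta.le]
      exact lt_of_le_of_lt (mul_le_mul htb.le (hK x (ball_subset_closedBall hx))
        (norm_nonneg _) ht₀.le) htη
    simp only [abs_of_pos this, smul_eq_mul, mul_one]
  have hzero : ∫ x in ball 0 1, (1 + A x).det ∂μ = 0 := by
    refine setIntegral_eq_zero_of_forall_eq_zero fun x hx => ?_
    have hx' := ball_subset_closedBall hx
    have hd : DifferentiableAt ℝ r x := (hr x hx').differentiableAt (by simp)
    have : 1 + A x = fderiv ℝ r x := by
      have : A x = fderiv ℝ r x - 1 := (hd.hasFDerivAt.sub (hasFDerivAt_id x)).fderiv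
      rw [this, add_sub_cancel]
    rw [this]
    exact det_fderiv_eq_zero_of_norm_eq_one hd ((isOpen_ball.mem_nhds hx |> eventually_of_mem)
      fun y hy => h1 y (ball_subset_closedBall hy))
  have hsum : ∫ x in ball 0 1, (1 + A x).det ∂μ = μ.real (ball 0 1) := by
    rw [setIntegral_congr_fun measurableSet_ball fun x _ => hdetw (A x),
      integral_finsetSum _ fun t _ => (hint t).const_mul _]
    simp only [integral_const_mul]
    rw [Finset.sum_congr rfl fun t ht => by rw [hvol t ht], ← Finset.sum_mul, hw, one_mul]
  have hpos : 0 < μ.real (ball (0 : E) 1) :=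
    ENNReal.toReal_pos (measure_ball_pos μ _ one_pos).ne' measure_ball_lt_top.ne
  linarith

end Brouwer

section InvarianceOfDomain

variable {E : Type*} [NormedAddCommGroup E] [InnerProductSpace ℝ E] [FiniteDimensional ℝ E]

/-- A continuous map on the closed unit ball at distance at most `1 / 2` from the identity has a
zero. -/
theorem exists_eq_zero_of_norm_sub_le {H : E → E} (hH : ContinuousOn H (closedBall 0 1))
    (hle : ∀ x ∈ closedBall (0 : E) 1, ‖H x - x‖ ≤ 1 / 2) : ∃ x ∈ closedBall (0 : E) 1, H x = 0 := by
  by_contra! hne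
  obtain ⟨G, hG⟩ := ContinuousMap.exists_restrict_eq (isClosed_closedBall (x := (0 : E)) (ε := 1))
    ⟨_, hH.domRestrict⟩
  have hGH : ∀ x ∈ closedBall (0 : E) 1, G x = H x := fun x hx => congrArg (fun f => f ⟨x, hx⟩) hG
  obtain ⟨m, hm, hmle⟩ : ∃ m > 0, ∀ x ∈ closedBall (0 : E) 1, m ≤ ‖H x‖ := by
    obtain ⟨x, hx, hmin⟩ := (isCompact_closedBall (0 : E) 1).exists_isMinOn
      ⟨0, by simp⟩ hH.norm
    exact ⟨‖H x‖, norm_pos_iff.2 (hne x hx), fun y hy => hmin hy⟩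
  obtain ⟨Q, hQ, hQG, -⟩ := G.continuous.exists_contDiff_approx 1
    (ε := fun _ => min (1 / 8) m) continuous_const (fun _ => by positivity)
  have hQH : ∀ x ∈ closedBall (0 : E) 1, ‖Q x - H x‖ < min (1 / 8) m := fun x hx => by
    rw [← hGH x hx, ← dist_eq_norm]
    exact hQG x
  let φ : ContDiffBump (0 : E) := ⟨3 / 4, 1, by norm_num, by norm_num⟩
  let R : E → E := fun x => x + φ x • (Q x - x)
  have hR : ContDiff ℝ 1 R :=
    contDiff_id.add (φ.contDiff.smul ((hQ.of_le le_rfl).sub contDiff_id))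
  have hR0 : ∀ x ∈ closedBall (0 : E) 1, R x ≠ 0 := by
    intro x hx h0
    have h1 := hQH x hx
    by_cases hx' : x ∈ closedBall (0 : E) (3 / 4)
    · have hφ : φ x = 1 := φ.one_of_mem_closedBall hx'
      have : Q x = 0 := by simpa [R, hφ] using h0
      rw [this, zero_sub, norm_neg] at h1
      exact absurd (hmle x hx) (not_le.2 (h1.trans_le (min_le_right _ _)))
    · rw [mem_closedBall_zero_iff, not_le] at hx'
      have h2 : ‖Q x - x‖ ≤ 5 / 8 := by
        have h3 := norm_sub_le_norm_sub_add_norm_sub (Q x) (H x) x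
        have h4 := h1.trans_le (min_le_left _ _)
        linarith [hle x hx]
      have h5 : ‖x‖ = ‖φ x • (Q x - x)‖ := by
        rw [← norm_neg (φ x • _), ← eq_neg_of_add_eq_zero_left h0]
      rw [norm_smul, Real.norm_of_nonneg φ.nonneg] at h5
      have := mul_le_mul (φ.le_one (x := x)) h2 (norm_nonneg _) zero_le_one
      linarith
  refine false_of_contDiffAt_retraction (r := fun x => ‖R x‖⁻¹ • R x) (fun x hx => ?_)
    (fun x hx => ?_) (fun x hx => ?_)
  · exact ((hR.contDiffAt.norm ℝ (hR0 x hx)).inv (norm_ne_zero_iff.2 (hR0 x hx))).smul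
      hR.contDiffAt
  · exact norm_smul_inv_norm (𝕜 := ℝ) (hR0 x hx)
  · rw [mem_sphere_zero_iff_norm] at hx
    have hφ : φ x = 0 := φ.zero_of_le_dist (by simp [φ, hx])
    simp [R, hφ, hx]

/-- If `f` has a continuous left inverse `G` on the closed unit ball and `G` is small on a ball
around `0` containing `f 0`, then `f` takes the value `0`. -/
theorem exists_eq_zero_of_leftInverse {f G : E → E} (hf : ContinuousOn f (closedBall 0 1))
    (hG : Continuous G) (hGf : ∀ x ∈ closedBall (0 : E) 1, G (f x) = x) {ε : ℝ} (hε : 0 < ε)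
    (h0 : ‖f 0‖ < ε) (hGε : ∀ y, ‖y‖ ≤ ε → ‖G y‖ ≤ 1 / 10) :
    ∃ x ∈ closedBall (0 : E) 1, f x = 0 := by
  by_contra! hne
  let _ : MeasurableSpace E := borel E
  have : BorelSpace E := ⟨rfl⟩
  let μ : Measure E := Measure.addHaar
  have hcomp : IsCompact (f '' closedBall 0 1 ∩ {y | ε ≤ ‖y‖}) :=
    ((isCompact_closedBall _ _).image_of_continuousOn hf).inter_right
      (isClosed_le continuous_const continuous_norm)
  obtain ⟨δ, hδ, hδ1, hδle⟩ : ∃ δ > 0, δ ≤ 1 / 10 ∧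
      ∀ y ∈ f '' closedBall 0 1 ∩ {y | ε ≤ ‖y‖}, δ ≤ ‖G y‖ := by
    rcases (f '' closedBall 0 1 ∩ {y | ε ≤ ‖y‖}).eq_empty_or_nonempty with h | h
    · exact ⟨1 / 10, by norm_num, le_rfl, by simp [h]⟩
    · obtain ⟨y, ⟨⟨x, hx, rfl⟩, hy⟩, hmin⟩ := hcomp.exists_isMinOn h hG.norm.continuousOn
      refine ⟨min (1 / 10) ‖G (f x)‖, lt_min (by norm_num) (norm_pos_iff.2 fun hz => ?_),
        min_le_left _ _, fun z hz => (min_le_right _ _).trans (hmin hz)⟩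
      rw [hGf x hx] at hz
      rw [hz] at hy
      exact absurd h0 (not_lt.2 hy)
  obtain ⟨Q, hQ, hQG, -⟩ := hG.exists_contDiff_approx 1
    (ε := fun _ => δ / 2) continuous_const (fun _ => by positivity)
  have hnull : μ (Q '' sphere 0 ε) = 0 :=
    addHaar_image_eq_zero_of_differentiableOn_of_addHaar_eq_zero μ
      (hQ.differentiable (by simp)).differentiableOn
      (Measure.addHaar_sphere_of_ne_zero μ 0 hε.ne')
  obtain ⟨v, hv, hvQ⟩ : ∃ v ∈ ball (0 : E) (δ / 2), v ∉ Q '' sphere 0 ε := by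
    by_contra! hsub
    exact (measure_ball_pos μ (0 : E) (half_pos hδ)).ne' (measure_mono_null hsub hnull)
  rw [mem_ball_zero_iff] at hv
  let Φ : E → E := fun y => max (ε / ‖y‖) 1 • y
  have hΦ : ContinuousOn Φ {y | y ≠ 0} := 
    ((continuousOn_const.div continuous_norm.continuousOn fun y hy => norm_ne_zero_iff.2 hy).sup
      continuousOn_const).smul continuousOn_id
  have hΦ1 : ∀ y, ε ≤ ‖y‖ → Φ y = y := fun y hy => by
    have : ε / ‖y‖ ≤ 1 := div_le_one_of_le₀ hy (norm_nonneg _)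
    simp [Φ, max_eq_right this]
  have hΦ2 : ∀ y, y ≠ 0 → ‖y‖ ≤ ε → ‖Φ y‖ = ε := fun y hy0 hy => by
    have hpos := norm_pos_iff.2 hy0
    have : 1 ≤ ε / ‖y‖ := (one_le_div hpos).2 hy
    simp only [Φ, max_eq_left this, norm_smul, norm_div, norm_norm, Real.norm_of_nonneg hε.le]
    field_simp
  have hQv : ∀ y, ‖Q y - v - G y‖ < δ := fun y => by
    have h := hQG y
    rw [dist_eq_norm] at h
    calc _ = ‖(Q y - G y) - v‖ := by congr 1; abel
      _ ≤ ‖Q y - G y‖ + ‖v‖ := norm_sub_le _ _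
      _ < δ := by linarith
  obtain ⟨x, hx, hxz⟩ := exists_eq_zero_of_norm_sub_le (H := fun x => Q (Φ (f x)) - v)
    ((hQ.continuous.comp_continuousOn (hΦ.comp hf hne)).sub continuousOn_const) fun x hx => by
      rcases le_total ε ‖f x‖ with h | h
      · have := hQv (f x)
        rw [hGf x hx] at this
        simp only [hΦ1 _ h]
        linarith
      · have h1 := hQv (Φ (f x))
        have h2 := hGε _ (hΦ2 _ (hne x hx) h).le
        have h3 := hGε _ h
        rw [hGf x hx] at h3
        calc _ = ‖(Q (Φ (f x)) - v - G (Φ (f x))) + G (Φ (f x)) - x‖ := by congr 1; abel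
          _ ≤ ‖Q (Φ (f x)) - v - G (Φ (f x))‖ + ‖G (Φ (f x))‖ + ‖x‖ :=
            (norm_sub_le _ _).trans (by gcongr; exact norm_add_le _ _)
          _ ≤ 1 / 2 := by linarith
  rcases le_total ε ‖f x‖ with h | h
  · have h1 := hQv (f x)
    simp only [hΦ1 _ h] at hxz
    rw [hxz, zero_sub, norm_neg] at h1
    exact absurd (hδle _ ⟨mem_image_of_mem f hx, h⟩) (not_le.2 h1)
  · exact hvQ ⟨Φ (f x), by simpa using hΦ2 _ (hne x hx) h, sub_eq_zero.1 hxz⟩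

/-- Invariance of domain on the closed unit ball. -/
theorem image_closedBall_mem_nhds {f : E → E} (hf : ContinuousOn f (closedBall 0 1))
    (hinj : InjOn f (closedBall 0 1)) : f '' closedBall 0 1 ∈ 𝓝 (f 0) := by
  have : CompactSpace (closedBall (0 : E) 1) := isCompact_iff_compactSpace.1
    (isCompact_closedBall _ _)
  have hemb : IsClosedEmbedding ((closedBall (0 : E) 1).domRestrict f) :=
    hf.domRestrict.isClosedEmbedding hinj.injective
  obtain ⟨G, hG⟩ := ContinuousMap.exists_extension' (Y := E) hemb
    ⟨Subtype.val, continuous_subtype_val⟩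
  have hGf : ∀ x ∈ closedBall (0 : E) 1, G (f x) = x := fun x hx => congrFun hG ⟨x, hx⟩
  obtain ⟨ε, hε, hGε⟩ : ∃ ε > 0, ∀ y, dist y (f 0) < ε → ‖G y‖ < 1 / 10 := by
    have hG0 : G (f 0) = 0 := hGf 0 (by simp)
    have := Metric.continuousAt_iff.1 (G.continuous.continuousAt (x := f 0)) (1 / 10) (by norm_num)
    simpa [hG0] using this
  refine Metric.mem_nhds_iff.2 ⟨ε / 2, half_pos hε, fun c hc => ?_⟩
  rw [mem_ball] at hc
  have hsmall : ∀ y, ‖y‖ ≤ ε / 2 → ‖G (y + c)‖ ≤ 1 / 10 := fun y hy => by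
    refine (hGε _ ?_).le
    calc dist (y + c) (f 0) ≤ dist (y + c) c + dist c (f 0) := dist_triangle _ _ _
      _ < ε := by
        rw [dist_eq_norm, add_sub_cancel_right]
        linarith
  obtain ⟨x, hx, hxc⟩ := exists_eq_zero_of_leftInverse (f := fun x => f x - c)
    (G := fun y => G (y + c)) (ε := ε / 2) (hf.sub continuousOn_const) (by fun_prop)
    (fun x hx => by simpa using hGf x hx) (half_pos hε)
    (by rwa [dist_comm, dist_eq_norm] at hc) hsmall
  exact ⟨x, hx, sub_eq_zero.1 hxc⟩

/-- **Invariance of domain** in a Euclidean space. -/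
theorem image_mem_nhds_of_continuousOn_of_injOn {f : E → E} {s : Set E} {x : E} (hs : s ∈ 𝓝 x)
    (hf : ContinuousOn f s) (hinj : InjOn f s) : f '' s ∈ 𝓝 (f x) := by
  obtain ⟨ρ, hρ, hsub⟩ := Metric.nhds_basis_closedBall.mem_iff.1 hs
  let a : E → E := fun y => x + ρ • y
  have ha : MapsTo a (closedBall 0 1) s := fun y hy => hsub <| by
    rw [mem_closedBall_zero_iff] at hy
    simpa [a, dist_eq_norm, norm_smul, abs_of_pos hρ] using mul_le_of_le_one_right hρ.le hy
  have hainj : Function.Injective a := fun y z h =>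
    smul_right_injective E hρ.ne' (add_left_cancel h)
  have h := image_closedBall_mem_nhds (f := f ∘ a)
    (hf.comp (by fun_prop) ha) (hinj.comp hainj.injOn ha)
  rw [image_comp] at h
  have ha0 : (f ∘ a) 0 = f x := by simp [a]
  rw [ha0] at h
  exact mem_of_superset h (image_mono ha.image_subset)

/-- **Invariance of domain** for topological manifolds: an injective continuous map between
manifolds modelled on the same Euclidean space is open. -/
theorem isOpenMap_of_continuous_of_injective (E : Type*) [NormedAddCommGroup E]
    [InnerProductSpace ℝ E] [FiniteDimensional ℝ E] {N P : Type*} [TopologicalSpace N]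
    [TopologicalSpace P] [ChartedSpace E N] [ChartedSpace E P] {f : N → P} (hf : Continuous f)
    (hinj : Function.Injective f) : IsOpenMap f := by
  refine IsOpenMap.of_nhds_le fun x s hs => ?_
  let φ := chartAt E x
  let ψ := chartAt E (f x)
  have hx : x ∈ φ.source := mem_chart_source E x
  have hfx : f x ∈ ψ.source := mem_chart_source E (f x)
  let S : Set E := φ.target ∩ φ.symm ⁻¹' (f ⁻¹' (s ∩ ψ.source))
  have hSmaps : ∀ u ∈ S, f (φ.symm u) ∈ s ∩ ψ.source := fun u hu => hu.2
  have hS : S ∈ 𝓝 (φ x) := by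
    refine inter_mem (φ.open_target.mem_nhds (φ.map_source hx)) ?_
    refine (φ.continuousAt_symm (φ.map_source hx)).preimage_mem_nhds ?_
    rw [φ.left_inv hx]
    exact inter_mem hs (hf.continuousAt.preimage_mem_nhds (ψ.open_source.mem_nhds hfx))
  have hcont : ContinuousOn (ψ ∘ f ∘ φ.symm) S :=
    ψ.continuousOn.comp (hf.comp_continuousOn (φ.continuousOn_symm.mono inter_subset_left))
      fun u hu => (hSmaps u hu).2
  have hinjS : InjOn (ψ ∘ f ∘ φ.symm) S := fun u hu v hv huv =>
    φ.symm.injOn hu.1 hv.1 (hinj (ψ.injOn (hSmaps u hu).2 (hSmaps v hv).2 huv))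
  have himg := image_mem_nhds_of_continuousOn_of_injOn hS hcont hinjS
  have hval : (ψ ∘ f ∘ φ.symm) (φ x) = ψ (f x) := by simp [φ.left_inv hx]
  rw [hval] at himg
  filter_upwards [(ψ.continuousAt hfx).preimage_mem_nhds himg, ψ.open_source.mem_nhds hfx]
    with y ⟨u, hu, huy⟩ hy
  rw [← ψ.injOn (hSmaps u hu).2 hy huy]
  exact (hSmaps u hu).1

end InvarianceOfDomain

section UniformLimit

/-- If open continuous maps `Θn n` converge uniformly to an injective continuous map `Θ` into a
locally connected space, then near each point the image of `Θ` is eventually covered by that of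
`Θn n`. -/
theorem exists_nhds_eventually_image_subset {N P : Type*} [TopologicalSpace N] [T2Space N]
    [LocallyCompactSpace N] [EMetricSpace P] [LocallyConnectedSpace P] {Θn : ℕ → N → P} {Θ : N → P}
    (hopen : ∀ n, IsOpenMap (Θn n)) (hcont : ∀ n, Continuous (Θn n)) (hΘ : Continuous Θ)
    (hinj : Function.Injective Θ) (hunif : TendstoUniformly Θn Θ atTop) {x : N} {U : Set N}
    (hU : U ∈ 𝓝 x) : ∃ V ∈ 𝓝 x, ∀ᶠ n in atTop, Θ '' V ⊆ Θn n '' U := by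
  obtain ⟨C, hCx, hCU, hC⟩ := local_compact_nhds hU
  have hK : IsCompact (Θ '' (C \ interior C)) := (hC.diff isOpen_interior).image hΘ
  have hxK : Θ x ∉ Θ '' (C \ interior C) := by
    rintro ⟨z, hz, hzx⟩
    exact hz.2 (hinj hzx ▸ mem_interior_iff_mem_nhds.2 hCx)
  obtain ⟨ε, hε, hball⟩ := EMetric.mem_nhds_iff.1 (hK.isClosed.isOpen_compl.mem_nhds hxK)
  have hε2 : 0 < ε / 2 := ENNReal.half_pos hε.ne'
  obtain ⟨O, hOsub, hO, hxO, hOconn⟩ := locallyConnectedSpace_iff_subsets_isOpen_isConnected.1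
    inferInstance (Θ x) _ (Metric.eball_mem_nhds (Θ x) hε2)
  refine ⟨Θ ⁻¹' O, hΘ.continuousAt.preimage_mem_nhds (hO.mem_nhds hxO), ?_⟩
  filter_upwards [EMetric.tendstoUniformly_iff.1 hunif _ hε2,
    (hunif.tendsto_at x).eventually (hO.mem_nhds hxO)] with n hn hnx
  have hsub : O ⊆ Θn n '' interior C := by
    refine hOconn.isPreconnected.subset_of_closure_inter_subset (hopen n _ isOpen_interior)
      ⟨Θn n x, hnx, mem_image_of_mem _ (mem_interior_iff_mem_nhds.2 hCx)⟩ ?_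
    rintro y ⟨hy, hyO⟩
    have hyC : y ∈ Θn n '' C := closure_minimal (image_mono interior_subset)
      (hC.image (hcont n)).isClosed hy
    obtain ⟨c, hc, rfl⟩ := hyC
    refine mem_image_of_mem _ (by_contra fun hcC => ?_)
    refine hball (show Θ c ∈ Metric.eball (Θ x) ε from ?_) (mem_image_of_mem Θ ⟨hc, hcC⟩)
    calc edist (Θ c) (Θ x) ≤ edist (Θ c) (Θn n c) + edist (Θn n c) (Θ x) := edist_triangle _ _ _
      _ < ε / 2 + ε / 2 := ENNReal.add_lt_add (hn c) (hOsub hyO)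
      _ = ε := ENNReal.add_halves ε
  exact (image_preimage_subset Θ O).trans (hsub.trans (image_mono (interior_subset.trans hCU)))

theorem eventually_image_subset_image_of_isCompact {N P : Type*} [TopologicalSpace N] [T2Space N]
    [LocallyCompactSpace N] [EMetricSpace P] [LocallyConnectedSpace P] {Θn : ℕ → N → P} {Θ : N → P}
    (hopen : ∀ n, IsOpenMap (Θn n)) (hcont : ∀ n, Continuous (Θn n)) (hΘ : Continuous Θ)
    (hinj : Function.Injective Θ) (hunif : TendstoUniformly Θn Θ atTop) {K U : Set N}
    (hK : IsCompact K) (hU : IsOpen U) (hKU : K ⊆ U) :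
    ∀ᶠ n in atTop, Θ '' K ⊆ Θn n '' U := by
  refine hK.induction_on (p := fun S => ∀ᶠ n in atTop, Θ '' S ⊆ Θn n '' U) (by simp)
    (fun s t hst ht => ht.mono fun n hn => (image_mono hst).trans hn)
    (fun s t hs ht => ?_) (fun x hx => ?_)
  · filter_upwards [hs, ht] with n h1 h2
    rw [image_union]
    exact union_subset h1 h2
  · obtain ⟨V, hV, h⟩ := exists_nhds_eventually_image_subset hopen hcont hΘ hinj hunif
      (hU.mem_nhds (hKU hx))
    exact ⟨V, mem_nhdsWithin_of_mem_nhds hV, h⟩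

theorem tendsto_setIntegral_of_tendstoUniformly {α : Type*} [MeasurableSpace α] {μ : Measure α}
    {F : ℕ → α → ℝ} {f : α → ℝ} (hF : ∀ n, Integrable (F n) μ) (hf : Integrable f μ)
    (hunif : TendstoUniformly F f atTop) {A : Set α} (hA : μ A < ⊤) :
    Tendsto (fun n => ∫ x in A, F n x ∂μ) atTop (𝓝 (∫ x in A, f x ∂μ)) := by
  rw [Metric.tendsto_nhds]
  intro ε hε
  have hm : 0 < μ.real A + 1 := by positivity
  filter_upwards [Metric.tendstoUniformly_iff.1 hunif (ε / (μ.real A + 1)) (by positivity)]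
    with n hn
  rw [dist_comm, dist_eq_norm, ← integral_sub hf.integrableOn (hF n).integrableOn]
  calc _ ≤ ε / (μ.real A + 1) * μ.real A :=
        norm_setIntegral_le_of_norm_le_const hA fun x _ => by
          rw [← dist_eq_norm]
          exact (hn x).le
    _ < ε := by
        rw [div_mul_eq_mul_div, div_lt_iff₀ hm]
        nlinarith

/-- A Jacobian is nonnegative almost everywhere. -/
theorem IsAbsolutelyContinuousWithJacobian.ae_nonneg {N P : Type*}
    [TopologicalSpace N] [MeasurableSpace N] [TopologicalSpace P] [MeasurableSpace P]
    {μN : Measure N} {μP : Measure P} {Θ : N → P} {J : N → ℝ}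
    (h : IsAbsolutelyContinuousWithJacobian μN μP Θ J) : 0 ≤ᵐ[μN] J :=
  ae_nonneg_of_forall_setIntegral_nonneg h.integrable fun s hs _ =>
    (h.measure_image s hs).2 ▸ ENNReal.toReal_nonneg

theorem IsAbsolutelyContinuousWithJacobian.measure_image_eq {N P : Type*}
    [TopologicalSpace N] [MeasurableSpace N] [TopologicalSpace P] [MeasurableSpace P]
    {μN : Measure N} {μP : Measure P} {Θ : N → P} {J : N → ℝ}
    (h : IsAbsolutelyContinuousWithJacobian μN μP Θ J) {A : Set N} (hA : MeasurableSet A) :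
    μP (Θ '' A) = ENNReal.ofReal (∫ x in A, J x ∂μN) := by
  rw [← (h.measure_image A hA).2, ENNReal.ofReal_toReal (h.measure_image A hA).1.ne]

/-- Two finite Borel measures on a locally compact second countable space that agree on compact
sets are equal. -/
theorem measure_ext_of_isCompact {X : Type*} [TopologicalSpace X] [T2Space X]
    [LocallyCompactSpace X] [SecondCountableTopology X]
    [MeasurableSpace X] [BorelSpace X] {μ ν : Measure X} [IsFiniteMeasure μ] [IsFiniteMeasure ν]
    (h : ∀ K, IsCompact K → μ K = ν K) : μ = ν := by
  ext A hA
  rw [hA.measure_eq_iSup_isCompact, hA.measure_eq_iSup_isCompact]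
  exact iSup_congr fun K => iSup_congr fun _ => iSup_congr fun hK => h K hK

end UniformLimit

/-- `N` and `P` are second countable Hausdorff topological manifolds without boundary, of the same
dimension `d`. The distance of `P` induces its topology and may take the value `∞`, as the
Riemannian distance of a disconnected manifold does. The measures are arbitrary Borel measures,
locally finite on `N` and finite on `P`; Riemannian volumes are a special case. -/
theorem uniform_limit_absolutely_continuous
    {d : ℕ} {N P : Type*}
    [TopologicalSpace N] [T2Space N] [SecondCountableTopology N]
    [ChartedSpace (EuclideanSpace ℝ (Fin d)) N] [MeasurableSpace N] [BorelSpace N]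
    [EMetricSpace P] [SecondCountableTopology P]
    [ChartedSpace (EuclideanSpace ℝ (Fin d)) P] [MeasurableSpace P] [BorelSpace P]
    (μN : Measure N) [IsLocallyFiniteMeasure μN]
    (μP : Measure P) [IsFiniteMeasure μP]
    (Θn : ℕ → N → P) (Jn : ℕ → N → ℝ)
    (hn : ∀ n, IsAbsolutelyContinuousWithJacobian μN μP (Θn n) (Jn n))
    (Θ : N → P) (hΘ_cont : Continuous Θ) (hΘ_inj : Function.Injective Θ)
    (hΘ_unif : TendstoUniformly Θn Θ atTop)
    (J : N → ℝ) (hJ_cont : Continuous J) (hJ_int : Integrable J μN)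
    (hJ_unif : TendstoUniformly Jn J atTop) :
    IsAbsolutelyContinuousWithJacobian μN μP Θ J := by
  have : LocallyCompactSpace N := ChartedSpace.locallyCompactSpace (EuclideanSpace ℝ (Fin d)) N
  have : LocallyConnectedSpace P :=
    ChartedSpace.locallyConnectedSpace (EuclideanSpace ℝ (Fin d)) P
  have hJ_nonneg : 0 ≤ᵐ[μN] J := by
    filter_upwards [ae_all_iff.2 fun n => (hn n).ae_nonneg] with x hx
    exact ge_of_tendsto' (hJ_unif.tendsto_at x) hx
  have hlim : ∀ A : Set N, μN A < ⊤ →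
      Tendsto (fun n => ENNReal.ofReal (∫ x in A, Jn n x ∂μN)) atTop
        (𝓝 (ENNReal.ofReal (∫ x in A, J x ∂μN))) := fun A hA =>
    ENNReal.tendsto_ofReal (tendsto_setIntegral_of_tendstoUniformly (fun n => (hn n).integrable)
      hJ_int hJ_unif hA)
  have hemb : MeasurableEmbedding Θ :=
    (IsOpenEmbedding.of_continuous_injective_isOpenMap hΘ_cont hΘ_inj
      (isOpenMap_of_continuous_of_injective (EuclideanSpace ℝ (Fin d)) hΘ_cont
        hΘ_inj)).measurableEmbedding
  let ν : Measure N := μN.withDensity fun x => ENNReal.ofReal (J x)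
  have hν : ∀ A, MeasurableSet A → ν A = ENNReal.ofReal (∫ x in A, J x ∂μN) := fun A hA => by
    rw [withDensity_apply _ hA,
      ofReal_integral_eq_lintegral_ofReal hJ_int.integrableOn (ae_restrict_of_ae hJ_nonneg)]
  have : IsFiniteMeasure ν := ⟨by rw [hν _ .univ]; exact ENNReal.ofReal_lt_top⟩
  have : IsFiniteMeasure (μP.comap Θ) :=
    ⟨by rw [hemb.comap_apply]; exact measure_lt_top _ _⟩
  have heq : μP.comap Θ = ν := by
    refine measure_ext_of_isCompact fun K hK => le_antisymm ?_ ?_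
    · rw [hemb.comap_apply]
      refine le_of_forall_gt fun b hb => ?_
      obtain ⟨U, hKU, hU, hUb⟩ := K.exists_isOpen_lt_of_lt b hb
      obtain ⟨L, hL, hKL, hLU⟩ := exists_compact_between hK hU hKU
      refine lt_of_le_of_lt ?_ ((measure_mono (interior_subset.trans hLU)).trans_lt hUb)
      rw [hν _ isOpen_interior.measurableSet]
      refine ge_of_tendsto
        (hlim _ ((measure_mono interior_subset).trans_lt hL.measure_lt_top)) ?_
      filter_upwards [eventually_image_subset_image_of_isCompact
        (fun n => isOpenMap_of_continuous_of_injective (EuclideanSpace ℝ (Fin d))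
          (hn n).continuous (hn n).injective)
        (fun n => (hn n).continuous) hΘ_cont hΘ_inj hΘ_unif hK isOpen_interior hKL] with n h
      rw [← (hn n).measure_image_eq isOpen_interior.measurableSet]
      exact measure_mono h
    · rw [hemb.comap_apply, hν K hK.measurableSet]
      refine le_of_forall_gt fun b hb => ?_
      obtain ⟨V, hKV, hV, hVb⟩ := (Θ '' K).exists_isOpen_lt_of_lt b hb
      refine lt_of_le_of_lt ?_ hVb
      obtain ⟨ε, hε, hεV⟩ := (hK.image hΘ_cont).exists_thickening_subset_open hV hKV
      refine le_of_tendsto (hlim K hK.measure_lt_top) ?_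
      filter_upwards [EMetric.tendstoUniformly_iff.1 hΘ_unif _ (ENNReal.ofReal_pos.2 hε)]
        with n h
      rw [← (hn n).measure_image_eq hK.measurableSet]
      refine measure_mono (Subset.trans ?_ hεV)
      rintro _ ⟨x, hx, rfl⟩
      rw [mem_thickening_iff_exists_edist_lt]
      exact ⟨Θ x, mem_image_of_mem Θ hx, by rw [edist_comm]; exact h x⟩
  refine ⟨hΘ_cont, hΘ_inj, hJ_int, fun A hA => ⟨measure_lt_top _ _, ?_⟩⟩
  rw [← hemb.comap_apply, heq, hν A hA, ENNReal.toReal_ofReal]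
  exact setIntegral_nonneg_of_ae hJ_nonneg
end
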